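/- Let G be a finite group. If G has a non-abelian minimal normal subgroup N such that N is contained in the commutator subgroup G', then the average of the degrees of the irreducible complex characters of G is at least 16/5. -/

import Mathlib

open CategoryTheory

/-- The set of irreducible complex characters of `G`: characters of simple
finite-dimensional complex representations of `G`. -/
noncomputable def IrrChar (G : Type) [Group G] : Set (G → ℂ) :=
  {χ | ∃ V : FDRep ℂ G, Simple V ∧ χ = fun g => V.character g}

/-- The degree of a character, read off from its value at `1`. -/
noncomputable def charDeg {G : Type} [Group G] (χ : G → ℂ) : ℕ :=
  ⌊(χ 1).re⌋₊

/-- The average degree of the irreducible characters of `G` satisfying a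
predicate `p` (with the convention that the average of the empty set is `0`). -/
noncomputable def acdRel (G : Type) [Group G] (p : (G → ℂ) → Prop) : ℝ :=
  (∑ᶠ χ ∈ {χ ∈ IrrChar G | p χ}, (charDeg χ : ℝ)) /
    ({χ ∈ IrrChar G | p χ} : Set (G → ℂ)).ncard

/-- The average character degree of `G`. -/
noncomputable def acd (G : Type) [Group G] : ℝ := acdRel G fun _ => True

/-!
The assertion is that `∑ χ, (5 * χ(1) - 16) ≥ 0`. The `k` irreducible characters trivial on `N`
contribute at least `-11 * k` to this sum; the others are grouped into Clifford classes relative to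
`N`. If `W` has least degree in its class and `e` is the norm of `W|N`, the class contributes at
least `k * (5 * W(1) - 16) / e`. So one has to find representatives `W` whose weights
`(5 * W(1) - 16) / e` add up to at least `11`. As `N` is perfect and has no irreducible character of
degree `2`, only the classes with `W(1) = 3` have negative weight, namely `-1`.

If `W(1) = 3`, then the products of `W` with itself and with its dual have constituents of larger
degree on `N`, and the few small decompositions that are possible show that their classes make up
for the classes of degree `3`.

If there is no `W` of degree `3`, all weights are nonnegative. A prime `p ≥ 5` divides `|N|` by
Burnside's theorem, and the action of `G` on the Sylow `p`-subgroups of `N` gives a `W` with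
`p * e ≤ W(1)`. Its weight is at least `11` unless `W(1) = 5`; in that case the weight is `9`, and
the dual of `W` or a constituent of its symmetric or alternating square supplies what is missing.
-/

namespace AverageCharacterDegree

open Representation Module

/-! ### The semiring of characters -/

section Character

variable {G H : Type} [Group G] [Group H]

variable (G) in
/-- The characters of all finite-dimensional complex representations of `G`, as a subsemiring of
the ring of functions `G → ℂ`. -/
def characterSemiring : Subsemiring (G → ℂ) where
  carrier := {φ | ∃ (V : Type) (_ : AddCommGroup V) (_ : Module ℂ V) (_ : FiniteDimensional ℂ V)
    (ρ : Representation ℂ G V), φ = ρ.character}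
  zero_mem' := ⟨Fin 0 → ℂ, _, _, inferInstance, Representation.trivial ℂ G _, by
    ext; simp [Representation.character]⟩
  one_mem' := ⟨ℂ, _, _, inferInstance, Representation.trivial ℂ G ℂ, by
    ext; simp [Representation.character]⟩
  add_mem' := by
    rintro _ _ ⟨V, _, _, _, ρ, rfl⟩ ⟨W, _, _, _, σ, rfl⟩
    exact ⟨V × W, _, _, inferInstance, ρ.prod σ,
      funext fun g => (LinearMap.trace_prodMap' (ρ g) (σ g)).symm⟩
  mul_mem' := by
    rintro _ _ ⟨V, _, _, _, ρ, rfl⟩ ⟨W, _, _, _, σ, rfl⟩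
    exact ⟨_, _, _, inferInstance, tprod ρ σ, (char_tensor ρ σ).symm⟩

variable (G) in
/-- A character of `G`, not necessarily irreducible and possibly zero. -/
abbrev Character : Type := characterSemiring G

instance : CoeFun (Character G) fun _ => G → ℂ := ⟨Subtype.val⟩

namespace Character

@[ext]
theorem ext {φ ψ : Character G} (h : ∀ g, φ g = ψ g) : φ = ψ := Subtype.ext (funext h)

@[simp] theorem one_apply (g : G) : (1 : Character G) g = 1 := rfl

@[simp] theorem add_apply (φ ψ : Character G) (g : G) : (φ + ψ) g = φ g + ψ g := rfl

@[simp] theorem mul_apply (φ ψ : Character G) (g : G) : (φ * ψ) g = φ g * ψ g := rfl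

theorem nsmul_apply (n : ℕ) (φ : Character G) (g : G) : (n • φ) g = n * φ g :=
  nsmul_eq_mul n (φ g)

@[simp] theorem sum_apply {ι : Type*} (s : Finset ι) (f : ι → Character G) (g : G) :
    (∑ i ∈ s, f i) g = ∑ i ∈ s, f i g := by
  rw [AddSubmonoidClass.coe_finsetSum, Finset.sum_apply]

/-- The character of a representation. -/
noncomputable def ofRep {V : Type} [AddCommGroup V] [Module ℂ V] [FiniteDimensional ℂ V]
    (ρ : Representation ℂ G V) : Character G :=
  ⟨ρ.character, V, _, _, inferInstance, ρ, rfl⟩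

theorem exists_rep (φ : Character G) :
    ∃ (V : Type) (_ : AddCommGroup V) (_ : Module ℂ V) (_ : FiniteDimensional ℂ V)
      (ρ : Representation ℂ G V), φ = ofRep ρ := by
  obtain ⟨_, V, _, _, _, ρ, rfl⟩ := φ
  exact ⟨V, _, _, inferInstance, ρ, rfl⟩

theorem apply_mul_comm (φ : Character G) (a b : G) : φ (a * b) = φ (b * a) := by
  obtain ⟨V, _, _, _, ρ, rfl⟩ := φ.exists_rep
  exact char_mul_comm ρ b a

theorem apply_conj (φ : Character G) (a b : G) : φ (a * b * a⁻¹) = φ b := by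
  rw [apply_mul_comm, inv_mul_cancel_left]

theorem apply_one_eq_charDeg (φ : Character G) : φ 1 = charDeg φ := by
  obtain ⟨V, _, _, _, ρ, rfl⟩ := φ.exists_rep
  simp [ofRep, charDeg]

/-- The degree `φ 1` of a character, as a semiring homomorphism to `ℕ`. -/
noncomputable def deg : Character G →+* ℕ where
  toFun φ := charDeg φ
  map_zero' := by simp [charDeg]
  map_one' := by simp [charDeg]
  map_add' φ ψ := by
    exact_mod_cast (apply_one_eq_charDeg (φ + ψ)).symm.trans
      (congrArg₂ (· + ·) φ.apply_one_eq_charDeg ψ.apply_one_eq_charDeg)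
  map_mul' φ ψ := by
    exact_mod_cast (apply_one_eq_charDeg (φ * ψ)).symm.trans
      (congrArg₂ (· * ·) φ.apply_one_eq_charDeg ψ.apply_one_eq_charDeg)

@[simp] theorem apply_one (φ : Character G) : φ 1 = deg φ := φ.apply_one_eq_charDeg

theorem deg_ofRep {V : Type} [AddCommGroup V] [Module ℂ V] [FiniteDimensional ℂ V]
    (ρ : Representation ℂ G V) : deg (ofRep ρ) = finrank ℂ V := by
  exact_mod_cast (apply_one (ofRep ρ)).symm.trans (char_one ρ)

theorem deg_eq_zero {φ : Character G} : deg φ = 0 ↔ φ = 0 := by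
  refine ⟨fun h => ?_, fun h => by rw [h, map_zero]⟩
  obtain ⟨V, _, _, _, ρ, rfl⟩ := φ.exists_rep
  have := Module.finrank_zero_iff.1 ((deg_ofRep ρ).symm.trans h)
  ext g
  simp [ofRep, Representation.character, Subsingleton.elim (ρ g) 0]

/-- Pullback of characters along a group homomorphism. -/
def comap (f : H →* G) : Character G →+* Character H where
  toFun φ := ⟨φ ∘ f, by
    obtain ⟨V, _, _, _, ρ, rfl⟩ := φ.exists_rep
    exact ⟨V, _, _, inferInstance, ρ.comp f, rfl⟩⟩
  map_zero' := rfl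
  map_one' := rfl
  map_add' _ _ := rfl
  map_mul' _ _ := rfl

@[simp] theorem comap_apply (f : H →* G) (φ : Character G) (h : H) : comap f φ h = φ (f h) := rfl

@[simp] theorem deg_comap (f : H →* G) (φ : Character G) : deg (comap f φ) = deg φ := by
  rw [← Nat.cast_inj (R := ℂ), ← apply_one, ← apply_one, comap_apply, map_one]

/-- Restriction of characters to a subgroup. -/
abbrev restrict (N : Subgroup G) : Character G →+* Character N := comap N.subtype

/-- The dual character `g ↦ φ g⁻¹`. -/
def dual : Character G →+* Character G where
  toFun φ := ⟨fun g => φ g⁻¹, by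
    obtain ⟨V, _, _, _, ρ, rfl⟩ := φ.exists_rep
    exact ⟨_, _, _, inferInstance, ρ.dual, funext fun g => (char_dual ρ g).symm⟩⟩
  map_zero' := rfl
  map_one' := rfl
  map_add' _ _ := rfl
  map_mul' _ _ := rfl

@[simp] theorem dual_apply (φ : Character G) (g : G) : dual φ g = φ g⁻¹ := rfl

@[simp] theorem dual_dual (φ : Character G) : dual (dual φ) = φ := by ext g; simp

@[simp] theorem deg_dual (φ : Character G) : deg (dual φ) = deg φ := by
  rw [← Nat.cast_inj (R := ℂ), ← apply_one, ← apply_one, dual_apply, inv_one]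

theorem dual_comap (f : H →* G) (φ : Character G) : dual (comap f φ) = comap f (dual φ) := by
  ext g; simp

/-- A character is irreducible if it is afforded by a simple representation. -/
def IsIrr (χ : Character G) : Prop := (χ : G → ℂ) ∈ IrrChar G

theorem IsIrr.ne_zero {χ : Character G} (h : χ.IsIrr) : χ ≠ 0 := by
  rintro rfl
  obtain ⟨V, hV, h⟩ := h
  have h0 : (finrank ℂ V : ℂ) = 0 := (FDRep.char_one V).symm.trans (congrFun h 1).symm
  have := Module.finrank_zero_iff.1 (Nat.cast_eq_zero.1 h0)
  refine Simple.not_isZero V ((Limits.IsZero.iff_id_eq_zero V).2 ?_)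
  ext v
  exact Subsingleton.elim _ _

theorem IsIrr.deg_pos {χ : Character G} (h : χ.IsIrr) : 0 < deg χ :=
  Nat.pos_of_ne_zero fun h0 => h.ne_zero (deg_eq_zero.1 h0)

theorem exists_of_mem_irrChar {f : G → ℂ} (hf : f ∈ IrrChar G) :
    ∃ χ : Character G, χ.IsIrr ∧ (χ : G → ℂ) = f := by
  obtain ⟨V, hV, rfl⟩ := hf
  exact ⟨ofRep V.ρ, ⟨V, hV, rfl⟩, rfl⟩

theorem exists_eq_add_of_isCompl {V : Type} [AddCommGroup V] [Module ℂ V] [FiniteDimensional ℂ V]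
    {ρ : Representation ℂ G V} {p q : Subrepresentation ρ} (h : IsCompl p q) :
    ofRep ρ = ofRep p.toRepresentation + ofRep q.toRepresentation := by
  have hc : IsCompl p.toSubmodule q.toSubmodule :=
    ⟨disjoint_iff.2 (congrArg Subrepresentation.toSubmodule h.inf_eq_bot),
      codisjoint_iff.2 (congrArg Subrepresentation.toSubmodule h.sup_eq_top)⟩
  let e : (p.toRepresentation.prod q.toRepresentation).Equiv ρ :=
    .mk (Submodule.prodEquivOfIsCompl _ _ hc) fun g => by
      ext x
      · simp; rfl
      · simp; rfl
  ext g
  exact (congrFun (char_iso e) g).symm.trans (LinearMap.trace_prodMap' _ _)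

theorem exists_eq_add_of_not_isIrreducible [Finite G] {V : Type} [AddCommGroup V] [Module ℂ V]
    [FiniteDimensional ℂ V] [Nontrivial V] {ρ : Representation ℂ G V} (h : ¬ ρ.IsIrreducible) :
    ∃ φ ψ : Character G, φ ≠ 0 ∧ ψ ≠ 0 ∧ ofRep ρ = φ + ψ := by
  have hnt : Nontrivial (Subrepresentation ρ) :=
    ⟨⊥, ⊤, fun h => bot_ne_top (α := Submodule ℂ V) (congrArg Subrepresentation.toSubmodule h)⟩
  obtain ⟨p, hp0, hp1⟩ : ∃ p : Subrepresentation ρ, p ≠ ⊥ ∧ p ≠ ⊤ := by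
    by_contra! hcon
    exact h ⟨fun p => or_iff_not_imp_left.2 (hcon p)⟩
  have : ComplementedLattice (Subrepresentation ρ) :=
    (inferInstance : IsSemisimpleRepresentation ρ)
  obtain ⟨q, hq⟩ := exists_isCompl p
  have ne_zero (r : Subrepresentation ρ) (hr : r ≠ ⊥) : ofRep r.toRepresentation ≠ 0 := fun h0 => by
    rw [← deg_eq_zero, deg_ofRep] at h0
    exact hr (Subrepresentation.toSubmodule_injective (Submodule.finrank_eq_zero.1 h0))
  exact ⟨_, _, ne_zero p hp0, ne_zero q fun h0 => hp1 (by simpa [h0] using hq.sup_eq_top),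
    exists_eq_add_of_isCompl hq⟩

end Character

end Character

/-! ### Multiplicities and decomposition into irreducible characters -/

section Mult

open Character

variable {G H : Type} [Group G] [Group H] [Finite G] [Finite H]

variable (G) in
/-- The inner product `⟨φ, ψ⟩ = |G|⁻¹ ∑ φ(g) ψ(g⁻¹)` of class functions, in its bilinear (rather
than sesquilinear) form. -/
noncomputable def classInner : (G → ℂ) →ₗ[ℂ] (G → ℂ) →ₗ[ℂ] ℂ :=
  letI := Fintype.ofFinite G
  LinearMap.mk₂ ℂ (fun φ ψ => (Nat.card G : ℂ)⁻¹ * ∑ g, φ g * ψ g⁻¹)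
    (fun φ φ' ψ => by simp [add_mul, mul_add, Finset.sum_add_distrib])
    (fun c φ ψ => by simp [Finset.mul_sum, mul_assoc, mul_left_comm])
    (fun φ ψ ψ' => by simp [mul_add, Finset.sum_add_distrib])
    (fun c φ ψ => by simp [Finset.mul_sum, mul_left_comm])

theorem classInner_apply [Fintype G] (φ ψ : G → ℂ) :
    classInner G φ ψ = (Nat.card G : ℂ)⁻¹ * ∑ g, φ g * ψ g⁻¹ := by
  simp only [classInner, LinearMap.mk₂_apply]
  congr!

theorem classInner_comm (φ ψ : G → ℂ) : classInner G φ ψ = classInner G ψ φ := by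
  have := Fintype.ofFinite G
  rw [classInner_apply, classInner_apply, ← Equiv.sum_comp (Equiv.inv G)]
  simp [mul_comm]

theorem classInner_ofRep {V W : Type} [AddCommGroup V] [Module ℂ V] [FiniteDimensional ℂ V]
    [AddCommGroup W] [Module ℂ W] [FiniteDimensional ℂ W]
    (ρ : Representation ℂ G V) (σ : Representation ℂ G W) :
    classInner G (ofRep σ) (ofRep ρ) = finrank ℂ (IntertwiningMap ρ σ) := by
  have := Fintype.ofFinite G
  have : Invertible (Nat.card G : ℂ) := invertibleOfNonzero (NeZero.ne _)
  rw [← card_inv_mul_sum_char_mul_char_eq_finrank, classInner_apply]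
  rfl

theorem cast_floor_classInner (φ ψ : Character G) :
    (⌊(classInner G φ ψ).re⌋₊ : ℂ) = classInner G φ ψ := by
  obtain ⟨V, _, _, _, ρ, rfl⟩ := φ.exists_rep
  obtain ⟨W, _, _, _, σ, rfl⟩ := ψ.exists_rep
  simp [classInner_ofRep]

/-- The inner product of two characters as a natural number. If `χ` is irreducible then
`mult φ χ` is the multiplicity of `χ` in `φ`. -/
noncomputable def mult : Character G →+ Character G →+ ℕ where
  toFun φ :=
    { toFun := fun ψ => ⌊(classInner G φ ψ).re⌋₊
      map_zero' := by simp
      map_add' := fun ψ ψ' => by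
        rw [← Nat.cast_inj (R := ℂ), Nat.cast_add]
        simp only [cast_floor_classInner]
        exact map_add _ _ _ }
  map_zero' := by ext; simp
  map_add' φ φ' := by
    ext ψ
    change ⌊(classInner G (φ + φ' : Character G) ψ).re⌋₊ =
      ⌊(classInner G φ ψ).re⌋₊ + ⌊(classInner G φ' ψ).re⌋₊
    rw [← Nat.cast_inj (R := ℂ), Nat.cast_add]
    simp only [cast_floor_classInner]
    exact LinearMap.map_add₂ _ _ _ _

theorem cast_mult_eq_classInner (φ ψ : Character G) : (mult φ ψ : ℂ) = classInner G φ ψ :=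
  cast_floor_classInner φ ψ

theorem cast_mult [Fintype G] (φ ψ : Character G) :
    (mult φ ψ : ℂ) = (Nat.card G : ℂ)⁻¹ * ∑ g, φ g * ψ g⁻¹ := by
  rw [cast_mult_eq_classInner, classInner_apply]

theorem mult_comm (φ ψ : Character G) : mult φ ψ = mult ψ φ := by
  rw [← Nat.cast_inj (R := ℂ), cast_mult_eq_classInner, cast_mult_eq_classInner, classInner_comm]

theorem mult_mul_left (φ χ ψ : Character G) : mult (φ * χ) ψ = mult φ (ψ * dual χ) := by
  have := Fintype.ofFinite G
  rw [← Nat.cast_inj (R := ℂ), cast_mult, cast_mult]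
  simp [mul_assoc, mul_comm (χ _)]

theorem mult_dual (φ ψ : Character G) : mult (dual φ) (dual ψ) = mult φ ψ := by
  have := Fintype.ofFinite G
  rw [← Nat.cast_inj (R := ℂ), cast_mult, cast_mult, ← Equiv.sum_comp (Equiv.inv G)]
  simp

theorem mult_ofRep {V W : Type} [AddCommGroup V] [Module ℂ V] [FiniteDimensional ℂ V]
    [AddCommGroup W] [Module ℂ W] [FiniteDimensional ℂ W]
    (ρ : Representation ℂ G V) (σ : Representation ℂ G W) :
    mult (ofRep σ) (ofRep ρ) = finrank ℂ (IntertwiningMap ρ σ) := by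
  rw [← Nat.cast_inj (R := ℂ), cast_mult_eq_classInner, classInner_ofRep]

theorem mult_self_pos {φ : Character G} (h : φ ≠ 0) : 0 < mult φ φ := by
  obtain ⟨V, _, _, _, ρ, rfl⟩ := φ.exists_rep
  have : Nontrivial V := by
    rw [← finrank_pos_iff (R := ℂ), ← deg_ofRep ρ]
    exact Nat.pos_of_ne_zero (mt deg_eq_zero.1 h)
  rw [mult_ofRep, Module.finrank_pos_iff_exists_ne_zero]
  refine ⟨IntertwiningMap.id ρ, fun h0 => ?_⟩
  obtain ⟨v, hv⟩ := exists_ne (0 : V)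
  exact hv (congrArg (fun T : IntertwiningMap ρ ρ => T v) h0)

theorem one_lt_mult_self_add {φ ψ : Character G} (hφ : φ ≠ 0) (hψ : ψ ≠ 0) :
    1 < mult (φ + ψ) (φ + ψ) := by
  have := mult_self_pos hφ
  have := mult_self_pos hψ
  simp only [map_add, AddMonoidHom.add_apply]
  lia

namespace Character

theorem isIrr_iff_mult_self {χ : Character G} : χ.IsIrr ↔ mult χ χ = 1 := by
  have := Fintype.ofFinite G
  have hN : (Nat.card G : ℂ) ≠ 0 := NeZero.ne _
  rw [← Nat.cast_inj (R := ℂ), cast_mult, inv_mul_eq_iff_eq_mul₀ hN, Nat.cast_one, mul_one]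
  constructor
  · rintro ⟨V, hV, h⟩
    rw [h]
    exact (FDRep.simple_iff_char_is_norm_one V).1 hV
  · obtain ⟨V, _, _, _, ρ, rfl⟩ := χ.exists_rep
    exact fun h => ⟨FDRep.of ρ, (FDRep.simple_iff_char_is_norm_one _).2 h, rfl⟩

theorem isIrr_ofRep_iff {V : Type} [AddCommGroup V] [Module ℂ V] [FiniteDimensional ℂ V]
    {ρ : Representation ℂ G V} : (ofRep ρ).IsIrr ↔ ρ.IsIrreducible := by
  refine ⟨fun h => ?_, fun _ => ?_⟩
  · have : Nontrivial V := finrank_pos_iff (R := ℂ).1 (deg_ofRep ρ ▸ h.deg_pos)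
    by_contra hρ
    obtain ⟨φ, ψ, hφ, hψ, hsum⟩ := exists_eq_add_of_not_isIrreducible hρ
    rw [isIrr_iff_mult_self, hsum] at h
    exact (one_lt_mult_self_add hφ hψ).ne' h
  · rw [isIrr_iff_mult_self, mult_ofRep, IsIrreducible.finrank_intertwiningMap_self]

theorem isIrr_one : (1 : Character G).IsIrr := by
  have := Fintype.ofFinite G
  rw [isIrr_iff_mult_self, ← Nat.cast_inj (R := ℂ), cast_mult]
  simp

protected theorem IsIrr.dual {χ : Character G} (h : χ.IsIrr) : (dual χ).IsIrr := by
  rwa [isIrr_iff_mult_self, mult_dual, ← isIrr_iff_mult_self]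

theorem IsIrr.mult_self {χ : Character G} (h : χ.IsIrr) : mult χ χ = 1 := isIrr_iff_mult_self.1 h

theorem IsIrr.mult_eq_zero {χ ψ : Character G} (hχ : χ.IsIrr) (hψ : ψ.IsIrr) (hne : χ ≠ ψ) :
    mult χ ψ = 0 := by
  obtain ⟨V, hV, hχV⟩ := hχ
  obtain ⟨W, hW, hψW⟩ := hψ
  have := Fintype.ofFinite G
  have : Invertible (Nat.card G : ℂ) := invertibleOfNonzero (NeZero.ne _)
  have hVW : ¬ Nonempty (V ≅ W) := fun ⟨e⟩ =>
    hne (Subtype.ext (by rw [hχV, hψW, FDRep.char_iso e]))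
  rw [← Nat.cast_inj (R := ℂ), cast_mult, hχV, hψW, Nat.cast_zero]
  simpa [hVW] using FDRep.char_orthonormal V W

theorem IsIrr.eq_of_mult_ne_zero {χ ψ : Character G} (hχ : χ.IsIrr) (hψ : ψ.IsIrr)
    (h : mult χ ψ ≠ 0) : χ = ψ := not_not.1 fun hne => h (hχ.mult_eq_zero hψ hne)

variable (G) in
theorem finite_setOf_isIrr : {χ : Character G | χ.IsIrr}.Finite := by
  have ortho : (classInner G).IsOrthoᵢ fun χ : {χ : Character G | χ.IsIrr} => (χ : G → ℂ) :=
    fun χ ψ hne => by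
      change classInner G χ ψ = 0
      rw [← cast_mult_eq_classInner, χ.2.mult_eq_zero ψ.2 fun h => hne (Subtype.ext h),
        Nat.cast_zero]
  have := (LinearMap.linearIndependent_of_isOrthoᵢ ortho fun χ h => by
    rw [← cast_mult_eq_classInner, χ.2.mult_self] at h
    simp at h).finite
  exact Set.toFinite _

end Character

variable (G) in
/-- The irreducible characters of `G`. -/
noncomputable def irr : Finset (Character G) := (finite_setOf_isIrr G).toFinset

theorem mem_irr {χ : Character G} : χ ∈ irr G ↔ χ.IsIrr := by simp [irr]

namespace Character

theorem mem_closure_isIrr (φ : Character G) :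
    φ ∈ AddSubmonoid.closure {χ : Character G | χ.IsIrr} := by
  induction hn : deg φ using Nat.strong_induction_on generalizing φ with
  | _ n ih =>
  subst hn
  by_cases hφ : φ = 0
  · exact hφ ▸ zero_mem _
  by_cases hirr : φ.IsIrr
  · exact AddSubmonoid.subset_closure hirr
  obtain ⟨V, _, _, _, ρ, rfl⟩ := φ.exists_rep
  have : Nontrivial V := by
    rw [← finrank_pos_iff (R := ℂ), ← deg_ofRep ρ]
    exact Nat.pos_of_ne_zero (mt deg_eq_zero.1 hφ)
  obtain ⟨α, β, hα, hβ, hsum⟩ := exists_eq_add_of_not_isIrreducible (mt isIrr_ofRep_iff.2 hirr)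
  rw [Ne, ← deg_eq_zero] at hα hβ
  rw [hsum]
  exact add_mem (ih _ (by rw [hsum, map_add]; lia) α rfl) (ih _ (by rw [hsum, map_add]; lia) β rfl)

theorem eq_sum_mult (φ : Character G) : φ = ∑ χ ∈ irr G, mult φ χ • χ := by
  induction mem_closure_isIrr φ using AddSubmonoid.closure_induction with
  | mem ψ hψ =>
    rw [Finset.sum_eq_single_of_mem ψ (mem_irr.2 hψ), hψ.mult_self, one_nsmul]
    intro χ hχ hne
    rw [hψ.mult_eq_zero (mem_irr.1 hχ) hne.symm, zero_nsmul]
  | zero => simp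
  | add φ ψ _ _ hφ hψ =>
    conv_lhs => rw [hφ, hψ]
    simp only [map_add, AddMonoidHom.add_apply, add_nsmul, Finset.sum_add_distrib]

theorem mult_eq_sum (φ ψ : Character G) : mult φ ψ = ∑ χ ∈ irr G, mult φ χ * mult ψ χ := by
  conv_lhs => rw [mult_comm, φ.eq_sum_mult]
  simp only [map_sum, map_nsmul, smul_eq_mul]

theorem deg_eq_sum (φ : Character G) : deg φ = ∑ χ ∈ irr G, mult φ χ * deg χ := by
  conv_lhs => rw [φ.eq_sum_mult]
  simp only [map_sum, map_nsmul, smul_eq_mul]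

theorem exists_isIrr_mult_ne_zero {φ : Character G} (h : φ ≠ 0) :
    ∃ χ : Character G, χ.IsIrr ∧ mult φ χ ≠ 0 := by
  by_contra! hφ
  rw [φ.eq_sum_mult] at h
  exact h (Finset.sum_eq_zero fun χ hχ => by rw [hφ χ (mem_irr.1 hχ), zero_nsmul])

theorem IsIrr.exists_eq_add {χ φ : Character G} (hχ : χ.IsIrr) (h : mult φ χ ≠ 0) :
    ∃ τ, φ = χ + τ := by
  obtain ⟨m, hm⟩ := Nat.exists_eq_succ_of_ne_zero h
  classical
  refine ⟨m • χ + ∑ ψ ∈ (irr G).erase χ, mult φ ψ • ψ, ?_⟩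
  conv_lhs => rw [φ.eq_sum_mult, ← Finset.add_sum_erase _ _ (mem_irr.2 hχ), hm, succ_nsmul]
  abel

theorem deg_le_of_mult_ne_zero {χ φ : Character G} (hχ : χ.IsIrr) (h : mult φ χ ≠ 0) :
    deg χ ≤ deg φ := by
  obtain ⟨τ, rfl⟩ := hχ.exists_eq_add h
  simp

theorem mult_self_le_sq {φ : Character G} {d : ℕ} (hd : 0 < d)
    (h : ∀ χ : Character G, χ.IsIrr → mult φ χ ≠ 0 → d ≤ deg χ) :
    mult φ φ ≤ (deg φ / d) ^ 2 := by
  have hsum : ∑ χ ∈ irr G, mult φ χ ≤ deg φ / d := by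
    rw [Nat.le_div_iff_mul_le hd, deg_eq_sum, Finset.sum_mul]
    refine Finset.sum_le_sum fun χ hχ => ?_
    by_cases hm : mult φ χ = 0
    · simp [hm]
    · exact Nat.mul_le_mul_left _ (h χ (mem_irr.1 hχ) hm)
  calc mult φ φ = ∑ χ ∈ irr G, mult φ χ * mult φ χ := mult_eq_sum φ φ
    _ ≤ (∑ χ ∈ irr G, mult φ χ) ^ 2 := by
      rw [pow_two, Finset.sum_mul]
      exact Finset.sum_le_sum fun χ hχ => Nat.mul_le_mul_left _
        (Finset.single_le_sum (f := fun χ => mult φ χ) (fun _ _ => Nat.zero_le _) hχ)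
    _ ≤ _ := Nat.pow_le_pow_left hsum 2

end Character

end Mult

/-! ### Symmetric and alternating squares -/

section Squares

open Character TensorProduct

theorem trace_map_comp_comm {K V : Type*} [Field K] [AddCommGroup V] [Module K V]
    [FiniteDimensional K V] (A : V →ₗ[K] V) :
    LinearMap.trace K (V ⊗[K] V) (TensorProduct.map A A ∘ₗ (TensorProduct.comm K V V).toLinearMap) =
      LinearMap.trace K V (A ∘ₗ A) := by
  let b := Module.finBasis K V
  rw [LinearMap.trace_eq_matrix_trace K (b.tensorProduct b), LinearMap.trace_eq_matrix_trace K b,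
    LinearMap.toMatrix_comp b b b, Matrix.trace, Matrix.trace, Fintype.sum_prod_type]
  refine Finset.sum_congr rfl fun i _ => ?_
  rw [Matrix.diag_apply, Matrix.mul_apply]
  refine Finset.sum_congr rfl fun j _ => ?_
  simp [LinearMap.toMatrix_apply, mul_comm]

variable {G H : Type} [Group G] [Group H]

namespace Character

theorem trace_comp_idempotent_mem {V : Type} [AddCommGroup V] [Module ℂ V] [FiniteDimensional ℂ V]
    (ρ : Representation ℂ G V) {P : V →ₗ[ℂ] V} (hP : P ∘ₗ P = P)
    (hcomm : ∀ g, ρ g ∘ₗ P = P ∘ₗ ρ g) :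
    (fun g => LinearMap.trace ℂ V (ρ g ∘ₗ P)) ∈ characterSemiring G := by
  have maps_range (g : G) (v : V) (hv : v ∈ P.range) : ρ g v ∈ P.range := by
    obtain ⟨w, rfl⟩ := hv
    exact ⟨ρ g w, (LinearMap.congr_fun (hcomm g) w).symm⟩
  let s : Subrepresentation ρ := ⟨P.range, fun g v => maps_range g v⟩
  refine ⟨P.range, _, _, inferInstance, s.toRepresentation, ?_⟩
  ext g
  rw [← LinearMap.trace_restrict_eq_of_forall_mem P.range (ρ g ∘ₗ P)
    fun x => maps_range g _ ⟨x, rfl⟩]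
  unfold Representation.character
  congr 1
  ext ⟨_, w, rfl⟩
  exact congrArg (ρ g) (LinearMap.congr_fun hP w)

/-- For `c = ± 1`, the idempotent `(1 + c • swap) / 2` of `V ⊗ V` commutes with `G`. -/
theorem sq_add_mul_div_two_mem (φ : Character G) {c : ℂ} (hc : c * c = 1) :
    (fun g => (φ g ^ 2 + c * φ (g ^ 2)) / 2) ∈ characterSemiring G := by
  obtain ⟨V, _, _, _, ρ, rfl⟩ := φ.exists_rep
  let S : V ⊗[ℂ] V →ₗ[ℂ] V ⊗[ℂ] V := (TensorProduct.comm ℂ V V).toLinearMap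
  have hS : S ∘ₗ S = LinearMap.id := by ext; simp [S]
  have hcomm (g : G) : (ρ.tprod ρ) g ∘ₗ S = S ∘ₗ (ρ.tprod ρ) g := by ext; simp [S]
  let P : V ⊗[ℂ] V →ₗ[ℂ] V ⊗[ℂ] V := (1 / 2 : ℂ) • (LinearMap.id + c • S)
  have hP : P ∘ₗ P = P := by
    simp only [P, LinearMap.comp_smul, LinearMap.smul_comp, LinearMap.comp_add,
      LinearMap.add_comp, hS, LinearMap.comp_id, LinearMap.id_comp, smul_smul, smul_add]
    match_scalars
    · linear_combination (1 / 4 : ℂ) * hc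
    · ring
  convert trace_comp_idempotent_mem (ρ.tprod ρ) hP fun g => by
    simp only [P, LinearMap.comp_smul, LinearMap.smul_comp, LinearMap.comp_add,
      LinearMap.add_comp, hcomm, LinearMap.comp_id, LinearMap.id_comp] using 2 with g
  have trace_sq : LinearMap.trace ℂ _ ((ρ.tprod ρ) g) = ρ.character g * ρ.character g :=
    congrFun (char_tensor ρ ρ) g
  have trace_swap : LinearMap.trace ℂ _ ((ρ.tprod ρ) g ∘ₗ S) = ρ.character (g ^ 2) := by
    rw [Representation.character, map_pow, pow_two]
    exact trace_map_comp_comm (ρ g)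
  simp only [P, LinearMap.comp_smul, LinearMap.comp_add, LinearMap.comp_id, map_smul, map_add,
    trace_sq, trace_swap, ofRep, smul_eq_mul]
  ring

/-- The symmetric square of a character. -/
noncomputable def symSq (φ : Character G) : Character G :=
  ⟨fun g => (φ g ^ 2 + φ (g ^ 2)) / 2, by simpa using φ.sq_add_mul_div_two_mem (one_mul 1)⟩

/-- The alternating square of a character. -/
noncomputable def altSq (φ : Character G) : Character G :=
  ⟨fun g => (φ g ^ 2 - φ (g ^ 2)) / 2, by
    simpa [sub_eq_add_neg] using φ.sq_add_mul_div_two_mem (c := -1) (by ring)⟩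

theorem symSq_apply (φ : Character G) (g : G) : symSq φ g = (φ g ^ 2 + φ (g ^ 2)) / 2 := rfl

theorem altSq_apply (φ : Character G) (g : G) : altSq φ g = (φ g ^ 2 - φ (g ^ 2)) / 2 := rfl

theorem symSq_add_altSq (φ : Character G) : symSq φ + altSq φ = φ * φ := by
  ext g
  rw [add_apply, symSq_apply, altSq_apply, mul_apply]
  ring

theorem comap_symSq (f : H →* G) (φ : Character G) : comap f (symSq φ) = symSq (comap f φ) := by
  ext h
  simp [symSq_apply]

theorem comap_altSq (f : H →* G) (φ : Character G) : comap f (altSq φ) = altSq (comap f φ) := by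
  ext h
  simp [altSq_apply]

theorem deg_altSq (φ : Character G) : deg (altSq φ) = (deg φ).choose 2 := by
  rw [← Nat.cast_inj (R := ℂ), ← apply_one, altSq_apply, one_pow, apply_one, Nat.cast_choose_two]
  ring

theorem deg_symSq (φ : Character G) : deg (symSq φ) = (deg φ + 1).choose 2 := by
  rw [← Nat.cast_inj (R := ℂ), ← apply_one, symSq_apply, one_pow, apply_one, Nat.cast_choose_two]
  push_cast
  ring

end Character

end Squares

/-! ### Schur's lemma and restriction to a normal subgroup -/

section Schur

open Character

variable {G V : Type} [Group G] [AddCommGroup V] [Module ℂ V]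

section ConjClass

variable [Finite G]

/-- The conjugacy class of `x`, as a finset. -/
noncomputable def conjClass (x : G) : Finset G := (MulAction.orbit (ConjAct G) x).toFinite.toFinset

theorem mem_conjClass {x y : G} : y ∈ conjClass x ↔ IsConj y x := by
  rw [conjClass, Set.Finite.mem_toFinset, ConjAct.mem_orbit_conjAct]

theorem card_conjClass (x : G) : (conjClass x).card = (Subgroup.centralizer {x}).index := by
  rw [conjClass, ← Set.ncard_eq_toFinset_card, ← MulAction.index_stabilizer,
    Subgroup.centralizer_eq_comap_stabilizer]
  exact (Subgroup.index_comap_of_surjective _ ConjAct.toConjAct.surjective).symm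

theorem Character.apply_eq_of_mem_conjClass (φ : Character G) {x y : G} (h : y ∈ conjClass x) :
    φ y = φ x := by
  obtain ⟨g, rfl⟩ := isConj_iff.1 (mem_conjClass.1 h)
  rw [apply_conj]

theorem commute_sum_conjClass (ρ : Representation ℂ G V) (x h : G) :
    Commute (∑ y ∈ conjClass x, ρ y) (ρ h) := by
  rw [Commute, SemiconjBy, Finset.sum_mul, Finset.mul_sum]
  refine (Finset.sum_equiv (MulAut.conj h).toEquiv (fun y => ?_) fun y _ => ?_).symm
  · simp only [mem_conjClass]
    exact ⟨(isConj_iff.2 ⟨h⁻¹, by simp [mul_assoc]⟩).trans, (isConj_iff.2 ⟨h, rfl⟩).trans⟩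
  · rw [← map_mul, ← map_mul]
    simp

end ConjClass

variable [FiniteDimensional ℂ V]

theorem exists_eq_smul_one_of_commute (ρ : Representation ℂ G V) [ρ.IsIrreducible]
    {T : End ℂ V} (hT : ∀ g, Commute T (ρ g)) : ∃ c : ℂ, T = c • 1 := by
  let f : IntertwiningMap ρ ρ := ⟨T, hT⟩
  obtain ⟨c, hc⟩ := (IsIrreducible.algebraMap_intertwiningMap_bijective_of_isAlgClosed (ρ := ρ)).2 f
  exact ⟨c, (congrArg IntertwiningMap.toLinearMap hc).symm⟩

theorem sum_conjClass_eq_smul_one [Finite G] (ρ : Representation ℂ G V) [ρ.IsIrreducible] (x : G) :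
    ∑ y ∈ conjClass x, ρ y = ((conjClass x).card * (ofRep ρ x / deg (ofRep ρ)) : ℂ) • 1 := by
  obtain ⟨c, hc⟩ := exists_eq_smul_one_of_commute ρ (commute_sum_conjClass ρ x)
  have hdeg : (deg (ofRep ρ) : ℂ) ≠ 0 :=
    Nat.cast_ne_zero.2 (isIrr_ofRep_iff.2 inferInstance).deg_pos.ne'
  have htrace : ∑ y ∈ conjClass x, LinearMap.trace ℂ V (ρ y) = (conjClass x).card * ofRep ρ x := by
    rw [← nsmul_eq_mul]
    exact Finset.sum_eq_card_nsmul fun y hy => (ofRep ρ).apply_eq_of_mem_conjClass hy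
  rw [← map_sum, hc, map_smul, LinearMap.trace_one, ← deg_ofRep ρ, smul_eq_mul] at htrace
  rw [hc, ← mul_div_assoc, ← htrace, mul_div_cancel_right₀ _ hdeg]

end Schur

section RelMult

open Character

variable {G : Type} [Group G]

theorem restrict_eq_zero {N : Subgroup G} {φ : Character G} : restrict N φ = 0 ↔ φ = 0 := by
  rw [← deg_eq_zero, ← deg_eq_zero, ← deg_comap N.subtype φ]

variable [Finite G]

/-- The inner product of the restrictions to `N` of two characters of `G`. -/
noncomputable def relMult (N : Subgroup G) : Character G →+ Character G →+ ℕ :=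
  ((mult (G := N)).comp (restrict N : Character G →+ Character N)).compl₂
    (restrict N : Character G →+ Character N)

theorem relMult_apply (N : Subgroup G) (φ ψ : Character G) :
    relMult N φ ψ = mult (restrict N φ) (restrict N ψ) := rfl

theorem relMult_comm (N : Subgroup G) (φ ψ : Character G) : relMult N φ ψ = relMult N ψ φ :=
  mult_comm _ _

theorem relMult_dual (N : Subgroup G) (φ ψ : Character G) :
    relMult N (dual φ) (dual ψ) = relMult N φ ψ := by
  rw [relMult_apply, ← dual_comap, ← dual_comap, mult_dual, relMult_apply]

theorem relMult_mul_left (N : Subgroup G) (φ χ ψ : Character G) :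
    relMult N (φ * χ) ψ = relMult N φ (ψ * dual χ) := by
  rw [relMult_apply, relMult_apply, map_mul (restrict N), mult_mul_left, map_mul (restrict N),
    dual_comap]

theorem relMult_eq_sum (N : Subgroup G) (φ ψ : Character G) :
    relMult N φ ψ = ∑ χ ∈ irr G, mult φ χ * relMult N χ ψ := by
  conv_lhs => rw [φ.eq_sum_mult]
  simp only [map_sum, map_nsmul, AddMonoidHom.finsetSum_apply, AddMonoidHom.nsmul_apply,
    smul_eq_mul]

theorem relMult_one_one (N : Subgroup G) : relMult N 1 1 = 1 := by
  rw [relMult_apply, map_one, isIrr_one.mult_self]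

theorem relMult_self_pos (N : Subgroup G) {φ : Character G} (h : φ ≠ 0) : 0 < relMult N φ φ :=
  mult_self_pos (mt restrict_eq_zero.1 h)

theorem exists_isIrr_relMult_ne_zero {N : Subgroup G} {φ ψ : Character G}
    (h : relMult N φ ψ ≠ 0) : ∃ χ : Character G, χ.IsIrr ∧ mult φ χ ≠ 0 ∧ relMult N χ ψ ≠ 0 := by
  rw [relMult_eq_sum] at h
  obtain ⟨χ, hχ, hne⟩ := Finset.exists_ne_zero_of_sum_ne_zero h
  exact ⟨χ, mem_irr.1 hχ, left_ne_zero_of_mul hne, right_ne_zero_of_mul hne⟩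

theorem relMult_le_of_mult_ne_zero {N : Subgroup G} {φ χ : Character G} (hχ : χ.IsIrr)
    (h : mult φ χ ≠ 0) (ψ : Character G) : relMult N χ ψ ≤ relMult N φ ψ := by
  obtain ⟨τ, rfl⟩ := hχ.exists_eq_add h
  simp

theorem isIrr_of_relMult_self {N : Subgroup G} {φ : Character G} (h : relMult N φ φ = 1) :
    φ.IsIrr := by
  have hφ : φ ≠ 0 := by
    rintro rfl
    simp at h
  obtain ⟨χ, hχ, hm⟩ := exists_isIrr_mult_ne_zero hφ
  obtain ⟨τ, rfl⟩ := hχ.exists_eq_add hm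
  by_cases hτ : τ = 0
  · rwa [hτ, add_zero]
  · rw [relMult_apply, map_add] at h
    exact absurd h (one_lt_mult_self_add (mt restrict_eq_zero.1 hχ.ne_zero)
      (mt restrict_eq_zero.1 hτ)).ne'

theorem deg_mul_apply_comm_of_intertwiningMap {N : Subgroup G} [N.Normal] {V W : Type}
    [AddCommGroup V] [Module ℂ V] [FiniteDimensional ℂ V]
    [AddCommGroup W] [Module ℂ W] [FiniteDimensional ℂ W]
    {ρ : Representation ℂ G V} {σ : Representation ℂ G W} [ρ.IsIrreducible] [σ.IsIrreducible]
    {T : IntertwiningMap (ρ.comp N.subtype) (σ.comp N.subtype)} (hT : T ≠ 0) (n : N) :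
    (deg (ofRep ρ) : ℂ) * ofRep σ n = deg (ofRep σ) * ofRep ρ n := by
  obtain ⟨v, hv⟩ : ∃ v, T v ≠ 0 := by
    by_contra! h
    exact hT (IntertwiningMap.ext (LinearMap.ext h))
  have hTy (y) (hy : y ∈ conjClass (n : G)) : T (ρ y v) = σ y (T v) := by
    obtain ⟨g, rfl⟩ := isConj_iff.1 (mem_conjClass.1 hy).symm
    exact LinearMap.congr_fun (T.isIntertwining' ⟨_, ‹N.Normal›.conj_mem n n.2 g⟩) v
  have hsum : T ((∑ y ∈ conjClass (n : G), ρ y) v) = (∑ y ∈ conjClass (n : G), σ y) (T v) := by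
    simp only [LinearMap.sum_apply, map_sum]
    exact Finset.sum_congr rfl hTy
  rw [sum_conjClass_eq_smul_one, sum_conjClass_eq_smul_one] at hsum
  simp only [LinearMap.smul_apply, Module.End.one_apply, map_smul] at hsum
  have h := smul_left_injective ℂ hv hsum
  have hcard : ((conjClass (n : G)).card : ℂ) ≠ 0 :=
    Nat.cast_ne_zero.2 (Finset.card_ne_zero_of_mem (mem_conjClass.2 (IsConj.refl _)))
  have hρ := (isIrr_ofRep_iff (ρ := ρ).2 inferInstance).deg_pos.ne'
  have hσ := (isIrr_ofRep_iff (ρ := σ).2 inferInstance).deg_pos.ne'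
  field_simp at h
  linear_combination -h

theorem Character.IsIrr.deg_nsmul_restrict_comm {N : Subgroup G} [N.Normal]
    {χ ψ : Character G} (hχ : χ.IsIrr) (hψ : ψ.IsIrr) (h : relMult N χ ψ ≠ 0) :
    deg ψ • restrict N χ = deg χ • restrict N ψ := by
  obtain ⟨V, _, _, _, ρ, rfl⟩ := ψ.exists_rep
  obtain ⟨W, _, _, _, σ, rfl⟩ := χ.exists_rep
  have := isIrr_ofRep_iff.1 hχ
  have := isIrr_ofRep_iff.1 hψ
  change mult (ofRep (σ.comp N.subtype)) (ofRep (ρ.comp N.subtype)) ≠ 0 at h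
  rw [mult_ofRep, ← Nat.pos_iff_ne_zero, Module.finrank_pos_iff_exists_ne_zero] at h
  obtain ⟨T, hT⟩ := h
  ext n
  rw [nsmul_apply, nsmul_apply]
  exact deg_mul_apply_comm_of_intertwiningMap hT n

namespace Character.IsIrr

variable {N : Subgroup G} [N.Normal] {χ ψ ω : Character G}

theorem deg_mul_relMult_comm (hχ : χ.IsIrr) (hψ : ψ.IsIrr) (h : relMult N χ ψ ≠ 0)
    (φ : Character G) : deg ψ * relMult N χ φ = deg χ * relMult N ψ φ := by
  have := congrArg (fun θ => mult θ (restrict N φ)) (hχ.deg_nsmul_restrict_comm hψ h)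
  simpa only [map_nsmul, AddMonoidHom.nsmul_apply, smul_eq_mul, ← relMult_apply] using this

theorem relMult_ne_zero_trans (hχ : χ.IsIrr) (hψ : ψ.IsIrr) (h : relMult N χ ψ ≠ 0)
    (h' : relMult N ψ ω ≠ 0) : relMult N χ ω ≠ 0 := fun h0 =>
  mul_ne_zero hχ.deg_pos.ne' h' (by rw [← deg_mul_relMult_comm hχ hψ h, h0, mul_zero])

theorem relMult_eq_of_relMult_one_ne_zero (hχ : χ.IsIrr) (h : relMult N χ 1 ≠ 0)
    (φ : Character G) : relMult N χ φ = deg χ * relMult N 1 φ := by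
  simpa using hχ.deg_mul_relMult_comm isIrr_one h φ

end Character.IsIrr

end RelMult

/-! ### Character values as sums of roots of unity -/

section FiniteOrder

variable {V : Type} [AddCommGroup V] [Module ℂ V] [FiniteDimensional ℂ V] {f : End ℂ V} {n : ℕ}

theorem card_roots_charpoly (f : End ℂ V) : f.charpoly.roots.card = finrank ℂ V := by
  rw [← (IsAlgClosed.splits f.charpoly).natDegree_eq_card_roots, LinearMap.charpoly_natDegree]

theorem pow_eq_one_of_mem_roots_charpoly (hf : f ^ n = 1) {z : ℂ} (hz : z ∈ f.charpoly.roots) :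
    z ^ n = 1 := by
  obtain ⟨v, hv⟩ := ((Module.End.hasEigenvalue_iff_isRoot_charpoly f z).2
    (Polynomial.isRoot_of_mem_roots hz)).exists_hasEigenvector
  have h := hv.pow_apply n
  rw [hf, Module.End.one_apply] at h
  exact smul_left_injective ℂ hv.2 (by simpa using h.symm)

theorem eq_smul_one_of_forall_mem_roots_charpoly (hn : n ≠ 0) (hf : f ^ n = 1) {α : ℂ}
    (h : ∀ z ∈ f.charpoly.roots, z = α) : f = α • 1 := by
  have hss : f.IsSemisimple := Module.End.isSemisimple_of_squarefree_aeval_eq_zero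
    (Polynomial.separable_X_pow_sub_C 1 (Nat.cast_ne_zero.2 hn) one_ne_zero).squarefree
    (by simp [hf])
  have htop : f.eigenspace α = ⊤ := by
    rw [eq_top_iff, ← hss.iSup_eigenspace_eq_top]
    refine iSup_le fun μ => ?_
    by_cases hμ : f.HasEigenvalue μ
    · rw [h μ ((Polynomial.mem_roots f.charpoly_monic.ne_zero).2
        ((Module.End.hasEigenvalue_iff_isRoot_charpoly f μ).1 hμ))]
    · simp [not_not.1 hμ]
  ext v
  exact Module.End.mem_eigenspace_iff.1 (htop ▸ Submodule.mem_top)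

end FiniteOrder

theorem norm_sum_le_card {E : Type*} [SeminormedAddCommGroup E] {s : Multiset E}
    (h : ∀ z ∈ s, ‖z‖ ≤ 1) : ‖s.sum‖ ≤ s.card := by
  induction s using Multiset.induction_on with
  | empty => simp
  | cons a t ih =>
    rw [Multiset.sum_cons, Multiset.card_cons, Nat.cast_succ]
    linarith [norm_add_le a t.sum, h a (t.mem_cons_self a),
      ih fun z hz => h z (Multiset.mem_cons_of_mem hz)]

theorem eq_of_sum_eq_card_nsmul {E : Type*} [NormedAddCommGroup E] [NormedSpace ℝ E]
    [StrictConvexSpace ℝ E] {s : Multiset E} (h : ∀ z ∈ s, ‖z‖ = 1) {α : E} (hα : ‖α‖ = 1)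
    (hs : s.sum = (s.card : ℝ) • α) : ∀ z ∈ s, z = α := by
  intro z hz
  obtain ⟨t, rfl⟩ := Multiset.exists_cons_of_mem hz
  rw [Multiset.sum_cons, Multiset.card_cons, Nat.cast_succ] at hs
  have hnorm : ‖z + t.sum‖ = t.card + 1 := by
    rw [hs, norm_smul, hα, mul_one, Real.norm_of_nonneg (by positivity)]
  have hray : SameRay ℝ z t.sum := by
    rw [sameRay_iff_norm_add]
    refine le_antisymm (norm_add_le _ _) ?_
    linarith [h z hz, norm_sum_le_card fun w hw => (h w (Multiset.mem_cons_of_mem hw)).le]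
  refine (sameRay_iff_of_norm_eq ((h z hz).trans hα.symm)).1 ?_
  have hsmul : SameRay ℝ z (((t.card : ℝ) + 1) • α) := hs ▸ (SameRay.refl z).add_right hray
  have hpos : (0 : ℝ) < t.card + 1 := by positivity
  simpa only [inv_smul_smul₀ hpos.ne'] using hsmul.pos_smul_right (inv_pos.2 hpos)

section Kernel

open Character
open scoped commutatorElement

variable {G : Type} [Group G]

namespace Character

/-- The kernel of a character, that is, of any representation affording it. In this form it is a
subgroup without any finiteness hypothesis. -/
def kernel (φ : Character G) : Subgroup G where
  carrier := {g | ∀ x, φ (g * x) = φ x}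
  one_mem' x := by rw [one_mul]
  mul_mem' ha hb x := by rw [mul_assoc, ha, hb]
  inv_mem' {a} ha x := by rw [← ha, mul_inv_cancel_left]

theorem mem_kernel {φ : Character G} {g : G} : g ∈ kernel φ ↔ ∀ x, φ (g * x) = φ x := Iff.rfl

instance (φ : Character G) : (kernel φ).Normal where
  conj_mem n hn g x := by
    rw [show g * n * g⁻¹ * x = g * (n * (g⁻¹ * x * g)) * g⁻¹ by group, apply_conj, hn,
      mul_assoc, apply_mul_comm, mul_assoc, mul_inv_cancel, mul_one]

theorem apply_eq_deg_of_mem_kernel {φ : Character G} {g : G} (h : g ∈ kernel φ) :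
    φ g = deg φ := by
  rw [← apply_one, ← h 1, mul_one]

theorem restrict_eq_deg_nsmul_one {φ : Character G} {N : Subgroup G} (h : N ≤ kernel φ) :
    restrict N φ = deg φ • 1 := by
  ext n
  rw [comap_apply, nsmul_apply, one_apply, mul_one]
  exact apply_eq_deg_of_mem_kernel (h n.2)

variable [Finite G]

theorem exists_eq_smul_one_of_norm_apply_eq_deg {V : Type} [AddCommGroup V] [Module ℂ V]
    [FiniteDimensional ℂ V] {ρ : Representation ℂ G V} {g : G} (hρ : ofRep ρ ≠ 0)
    (h : ‖ofRep ρ g‖ = deg (ofRep ρ)) :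
    ρ g = (ofRep ρ g / deg (ofRep ρ)) • 1 := by
  have hdeg : (deg (ofRep ρ) : ℂ) ≠ 0 := Nat.cast_ne_zero.2 (mt deg_eq_zero.1 hρ)
  have hpow : ρ g ^ Nat.card G = 1 := by rw [← map_pow, pow_card_eq_one', map_one]
  refine eq_smul_one_of_forall_mem_roots_charpoly Nat.card_pos.ne' hpow
    (eq_of_sum_eq_card_nsmul (fun z hz => ?_) ?_ ?_)
  · exact Complex.norm_eq_one_of_pow_eq_one (pow_eq_one_of_mem_roots_charpoly hpow hz)
      Nat.card_pos.ne'
  · rw [norm_div, h, Complex.norm_natCast, div_self (by exact_mod_cast hdeg)]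
  · rw [← Module.End.trace_eq_sum_roots_charpoly_of_splits (IsAlgClosed.splits _),
      card_roots_charpoly, ← deg_ofRep ρ, Complex.real_smul, Complex.ofReal_natCast,
      mul_div_cancel₀ _ hdeg]
    rfl

theorem mem_kernel_of_apply_eq_deg {φ : Character G} {g : G} (h : φ g = deg φ) :
    g ∈ kernel φ := by
  by_cases hφ : φ = 0
  · simp [mem_kernel, hφ]
  obtain ⟨V, _, _, _, ρ, rfl⟩ := φ.exists_rep
  have hg := exists_eq_smul_one_of_norm_apply_eq_deg hφ (by rw [h, Complex.norm_natCast])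
  rw [h, div_self (Nat.cast_ne_zero.2 (mt deg_eq_zero.1 hφ)), one_smul] at hg
  intro x
  change LinearMap.trace ℂ V (ρ (g * x)) = LinearMap.trace ℂ V (ρ x)
  rw [map_mul, hg, one_mul]

theorem commutatorElement_mem_kernel_of_norm_apply_eq_deg {φ : Character G} {g : G}
    (h : ‖φ g‖ = deg φ) (x : G) : ⁅g, x⁆ ∈ kernel φ := by
  by_cases hφ : φ = 0
  · simp [mem_kernel, hφ]
  obtain ⟨V, _, _, _, ρ, rfl⟩ := φ.exists_rep
  have hg := exists_eq_smul_one_of_norm_apply_eq_deg hφ h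
  have hcomm : ρ g * ρ x = ρ x * ρ g := by rw [hg]; simp
  have hone : ρ ⁅g, x⁆ = 1 := by
    rw [commutatorElement_def, map_mul, map_mul, map_mul, hcomm, mul_assoc (ρ x), ← map_mul ρ g,
      mul_inv_cancel, map_one, mul_one, ← map_mul, mul_inv_cancel, map_one]
  apply mem_kernel_of_apply_eq_deg
  rw [← apply_one]
  change LinearMap.trace ℂ V (ρ ⁅g, x⁆) = LinearMap.trace ℂ V (ρ 1)
  rw [hone, map_one ρ]

theorem isIntegral_apply (φ : Character G) (g : G) : IsIntegral ℤ (φ g) := by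
  obtain ⟨V, _, _, _, ρ, rfl⟩ := φ.exists_rep
  change IsIntegral ℤ (LinearMap.trace ℂ V (ρ g))
  rw [Module.End.trace_eq_sum_roots_charpoly_of_splits (IsAlgClosed.splits _)]
  refine IsIntegral.multiset_sum fun z hz => .of_pow (Nat.card_pos (α := G)) ?_
  rw [pow_eq_one_of_mem_roots_charpoly (by rw [← map_pow, pow_card_eq_one', map_one]) hz]
  exact isIntegral_one

end Character

end Kernel

/-! ### Permutation characters -/

section Permutation

open Character MulAction

variable {G X : Type} [Group G] [MulAction G X]

variable (G X) in
/-- The permutation representation of `G` on the functions on a `G`-set `X`. -/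
def permRep : Representation ℂ G (X → ℂ) where
  toFun g := LinearMap.funLeft ℂ ℂ (g⁻¹ • ·)
  map_one' := by ext; simp
  map_mul' a b := by ext; simp [LinearMap.funLeft_apply, mul_smul]

variable [Finite X]

theorem trace_permRep (g : G) : LinearMap.trace ℂ _ (permRep G X g) = Nat.card (fixedBy X g) := by
  classical
  have := Fintype.ofFinite X
  rw [LinearMap.trace_eq_matrix_trace ℂ (Pi.basisFun ℂ X), Matrix.trace, Nat.card_eq_fintype_card,
    Fintype.card_subtype, ← Finset.sum_boole]
  refine Finset.sum_congr rfl fun x _ => ?_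
  rw [Matrix.diag_apply, LinearMap.toMatrix_apply]
  simp [permRep, Pi.single_apply, inv_smul_eq_iff, eq_comm (a := x)]

variable (G X) in
/-- The character of the permutation representation, whose value at `g` is the number of fixed
points of `g`. -/
noncomputable def permChar : Character G := ofRep (permRep G X)

theorem permChar_apply (g : G) : permChar G X g = Nat.card (fixedBy X g) := trace_permRep g

theorem deg_permChar : deg (permChar G X) = Nat.card X := by
  rw [← Nat.cast_inj (R := ℂ), ← apply_one, permChar_apply, fixedBy_one_eq_univ, Nat.card_univ]

theorem restrict_permChar (K : Subgroup G) : restrict K (permChar G X) = permChar K X := by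
  ext k
  rw [comap_apply, permChar_apply, permChar_apply]
  rfl

theorem sum_permChar_mul [Fintype G] [IsPretransitive G X] (x : X) [Fintype (stabilizer G x)]
    {f : G → ℂ} (hf : ∀ a b, f (a * b * a⁻¹) = f b) :
    ∑ g, permChar G X g * f g = Nat.card X * ∑ g : stabilizer G x, f g := by
  classical
  have := Fintype.ofFinite X
  have hstab (y : X) : ∑ g, (if g • y = y then f g else 0) = ∑ g, if g • x = x then f g else 0 := by
    obtain ⟨a, rfl⟩ := exists_smul_eq G x y
    refine (Fintype.sum_equiv (MulAut.conj a).toEquiv _ _ fun g => ?_).symm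
    simp [hf, mul_smul]
  calc ∑ g, permChar G X g * f g = ∑ y : X, ∑ g, if g • y = y then f g else 0 := by
        rw [Finset.sum_comm]
        refine Finset.sum_congr rfl fun g _ => ?_
        rw [permChar_apply, Nat.card_eq_fintype_card, Fintype.card_subtype, ← Finset.sum_boole,
          Finset.sum_mul]
        simp
    _ = Nat.card X * ∑ g : stabilizer G x, f g := by
        rw [Finset.sum_congr rfl fun y _ => hstab y, Finset.sum_const, Finset.card_univ,
          ← Nat.card_eq_fintype_card, nsmul_eq_mul, ← Finset.sum_filter]
        congr 1
        exact Finset.sum_subtype _ (by simp [mem_stabilizer_iff]) f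

variable [Finite G]

theorem mult_permChar_mul [IsPretransitive G X] (x : X) (φ ψ : Character G) :
    mult (permChar G X * φ) ψ = relMult (stabilizer G x) φ ψ := by
  have := Fintype.ofFinite G
  have := Fintype.ofFinite (stabilizer G x)
  have hX : Nat.card X * Nat.card (stabilizer G x) = Nat.card G := by
    rw [← index_stabilizer_of_transitive G x, Subgroup.index_mul_card]
  have hsum := sum_permChar_mul (X := X) x (f := fun g => φ g * ψ g⁻¹) fun a b => by
    rw [conj_inv, apply_conj, apply_conj]
  rw [← Nat.cast_inj (R := ℂ), relMult_apply, cast_mult, cast_mult]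
  simp only [mul_apply, mul_assoc] at hsum ⊢
  rw [hsum, ← hX, Nat.cast_mul, mul_inv_rev, mul_assoc, inv_mul_cancel_left₀]
  · simp
  · exact Nat.cast_ne_zero.2 (Nat.card_pos_iff.2 ⟨⟨x⟩, inferInstance⟩).ne'

theorem mult_permChar_one : mult (permChar G X) 1 = Nat.card (orbitRel.Quotient G X) := by
  classical
  have := Fintype.ofFinite X
  have := Fintype.ofFinite G
  have := Fintype.ofFinite (orbitRel.Quotient G X)
  have h := congrArg (Nat.cast (R := ℂ)) (sum_card_fixedBy_eq_card_orbits_mul_card_group G X)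
  rw [← Nat.cast_inj (R := ℂ), cast_mult]
  simp only [permChar_apply, one_apply, mul_one, Nat.card_eq_fintype_card]
  push_cast at h
  rw [h]
  field_simp

theorem mult_permChar_self_left (χ : Character G) : mult (permChar G G) χ = deg χ := by
  have hstab : stabilizer G (1 : G) = ⊥ := by ext; simp
  have hrestrict : restrict (⊥ : Subgroup G) χ = deg χ • 1 := by
    ext g
    rw [comap_apply, Subsingleton.elim g 1, nsmul_apply, one_apply, mul_one, map_one, apply_one]
  rw [← mul_one (permChar G G), mult_permChar_mul (1 : G), hstab, relMult_apply, hrestrict, map_one,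
    map_nsmul, isIrr_one.mult_self, smul_eq_mul, mul_one]

end Permutation

/-! ### Burnside's theorem on groups of order `p ^ a * q ^ b` -/

section RootsOfUnity

variable {n : ℕ}

theorem exists_pow_sum_div_card_eq_one {K : Type*} [Field K] [NumberField K] {t : Multiset K}
    (hn : n ≠ 0) (ht : ∀ z ∈ t, z ^ n = 1) (h0 : t.sum ≠ 0)
    (hint : IsIntegral ℤ (t.sum / t.card)) : ∃ m, 0 < m ∧ (t.sum / t.card) ^ m = 1 := by
  have hcard : t.card ≠ 0 := mt Multiset.card_eq_zero.1 (by rintro rfl; exact h0 rfl)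
  obtain ⟨m, hm, h⟩ := NumberField.Embeddings.pow_eq_one_of_norm_le_one K ℂ
    (div_ne_zero h0 (Nat.cast_ne_zero.2 hcard)) hint fun φ => by
      have hφ : ‖(t.map φ).sum‖ ≤ (t.map φ).card := norm_sum_le_card fun z hz => by
        obtain ⟨w, hw, rfl⟩ := Multiset.mem_map.1 hz
        exact (Complex.norm_eq_one_of_pow_eq_one (by rw [← map_pow, ht w hw, map_one]) hn).le
      rw [map_div₀, map_multiset_sum, map_natCast, norm_div, Complex.norm_natCast]
      exact div_le_one_of_le₀ (by rwa [Multiset.card_map] at hφ) (Nat.cast_nonneg _)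
  exact ⟨m, hm, h⟩

theorem norm_sum_eq_card_of_isIntegral {s : Multiset ℂ} (hn : n ≠ 0) (hs : ∀ z ∈ s, z ^ n = 1)
    (h0 : s.sum ≠ 0) (hint : IsIntegral ℤ (s.sum / s.card)) : ‖s.sum‖ = s.card := by
  let K := IntermediateField.adjoin ℚ {z | z ∈ s}
  have hfin : {z | z ∈ s}.Finite := s.toFinset.finite_toSet.subset fun z => by simp
  have : Finite {z | z ∈ s} := hfin
  have : FiniteDimensional ℚ K := IntermediateField.finiteDimensional_adjoin fun z hz =>
    .of_pow (Nat.pos_of_ne_zero hn) (by rw [hs z hz]; exact isIntegral_one)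
  have : NumberField K := ⟨⟩
  obtain ⟨t, ht⟩ : ∃ t : Multiset K, t.map (algebraMap K ℂ) = s :=
    ⟨s.pmap Subtype.mk fun z hz => IntermediateField.subset_adjoin ℚ _ hz, by
      simp [Multiset.map_pmap, Multiset.pmap_eq_map]⟩
  have havg : algebraMap K ℂ (t.sum / t.card) = s.sum / s.card := by
    rw [map_div₀, map_multiset_sum, map_natCast, ht, ← ht, Multiset.card_map]
  rw [← havg, isIntegral_algebraMap_iff (algebraMap K ℂ).injective] at hint
  obtain ⟨m, hm, h⟩ := exists_pow_sum_div_card_eq_one hn (fun z hz => (algebraMap K ℂ).injective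
    (by rw [map_pow, hs _ (ht ▸ Multiset.mem_map_of_mem _ hz), map_one]))
    (fun h => h0 (by rw [← ht, ← map_multiset_sum, h, map_zero])) hint
  have hnorm : ‖s.sum / s.card‖ = 1 :=
    Complex.norm_eq_one_of_pow_eq_one (by rw [← havg, ← map_pow, h, map_one]) hm.ne'
  rw [norm_div, Complex.norm_natCast] at hnorm
  exact eq_of_div_eq_one hnorm

end RootsOfUnity

section Burnside

open Character
open scoped commutatorElement

variable {G : Type} [Group G] [Finite G]

namespace Character

variable {χ : Character G} {g : G}

theorem norm_apply_eq_deg_of_isIntegral (h0 : χ g ≠ 0) (hint : IsIntegral ℤ (χ g / deg χ)) :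
    ‖χ g‖ = deg χ := by
  obtain ⟨V, _, _, _, ρ, rfl⟩ := χ.exists_rep
  have htrace : ofRep ρ g = (ρ g).charpoly.roots.sum :=
    Module.End.trace_eq_sum_roots_charpoly_of_splits (IsAlgClosed.splits _)
  have hpow : ρ g ^ Nat.card G = 1 := by rw [← map_pow, pow_card_eq_one', map_one]
  rw [htrace, deg_ofRep ρ, ← card_roots_charpoly (ρ g)] at hint ⊢
  rw [htrace] at h0
  exact norm_sum_eq_card_of_isIntegral Nat.card_pos.ne'
    (fun z hz => pow_eq_one_of_mem_roots_charpoly hpow hz) h0 hint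

theorem IsIrr.isIntegral_card_conjClass_mul (hχ : χ.IsIrr) (g : G) :
    IsIntegral ℤ ((conjClass g).card * (χ g / deg χ) : ℂ) := by
  obtain ⟨V, _, _, _, ρ, rfl⟩ := χ.exists_rep
  have := isIrr_ofRep_iff.1 hχ
  have hV : Nontrivial V := finrank_pos_iff (R := ℂ).1 (deg_ofRep ρ ▸ hχ.deg_pos)
  let F : MonoidAlgebra ℤ G →ₐ[ℤ] End ℂ V := MonoidAlgebra.lift ℤ (End ℂ V) G ρ
  have hint : IsIntegral ℤ (F (∑ y ∈ conjClass g, MonoidAlgebra.single y 1)) :=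
    (IsIntegral.of_finite ℤ _).map F
  have hF : F (∑ y ∈ conjClass g, MonoidAlgebra.single y 1) =
      algebraMap ℂ (End ℂ V) ((conjClass g).card * (ofRep ρ g / deg (ofRep ρ))) := by
    rw [map_sum, Algebra.algebraMap_eq_smul_one, ← sum_conjClass_eq_smul_one]
    simp [F]
  rw [hF] at hint
  exact (isIntegral_algebraMap_iff (algebraMap ℂ (End ℂ V)).injective).1 hint

theorem IsIrr.isIntegral_div_deg_of_coprime (hχ : χ.IsIrr)
    (h : (conjClass g).card.Coprime (deg χ)) : IsIntegral ℤ (χ g / deg χ) := by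
  obtain ⟨u, v, huv⟩ := Nat.isCoprime_iff_coprime.2 h
  have hbezout : (u * (conjClass g).card + v * deg χ : ℂ) = 1 := by exact_mod_cast huv
  have hdeg : (deg χ : ℂ) ≠ 0 := Nat.cast_ne_zero.2 hχ.deg_pos.ne'
  have hsum : χ g / deg χ = u • ((conjClass g).card * (χ g / deg χ) : ℂ) + v • χ g := by
    rw [zsmul_eq_mul, zsmul_eq_mul]
    field_simp
    linear_combination -χ g * hbezout
  rw [hsum]
  exact ((hχ.isIntegral_card_conjClass_mul g).smul u).add ((χ.isIntegral_apply g).smul v)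

end Character

theorem sum_deg_mul_apply_eq_zero {g : G} (hg : g ≠ 1) : ∑ χ ∈ irr G, (deg χ : ℂ) * χ g = 0 := by
  have hfixed : permChar G G g = 0 := by simp [permChar_apply, MulAction.fixedBy, hg]
  rw [← hfixed, (permChar G G).eq_sum_mult, Character.sum_apply]
  exact Finset.sum_congr rfl fun χ _ => by rw [nsmul_apply, mult_permChar_self_left]

theorem exists_isIrr_not_dvd_deg {g : G} (hg : g ≠ 1) {q : ℕ} (hq : q.Prime) :
    ∃ χ : Character G, χ.IsIrr ∧ χ ≠ 1 ∧ χ g ≠ 0 ∧ ¬ q ∣ deg χ := by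
  classical
  by_contra! hdvd
  have hq0 : (q : ℚ) ≠ 0 := Nat.cast_ne_zero.2 hq.ne_zero
  set z := ∑ χ ∈ (irr G).erase 1, (deg χ / q) • χ g
  have hz : IsIntegral ℤ z := .sum _ fun χ _ => (χ.isIntegral_apply g).smul _
  have hsum : ∑ χ ∈ (irr G).erase 1, (deg χ : ℂ) * χ g = q * z := by
    rw [Finset.mul_sum]
    refine Finset.sum_congr rfl fun χ hχ => ?_
    by_cases h0 : χ g = 0
    · simp [h0]
    · rw [nsmul_eq_mul, ← mul_assoc, ← Nat.cast_mul, Nat.mul_div_cancel' (hdvd χ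
        (mem_irr.1 (Finset.mem_of_mem_erase hχ)) (Finset.ne_of_mem_erase hχ) h0)]
  have hzero := sum_deg_mul_apply_eq_zero hg
  rw [← Finset.add_sum_erase _ _ (mem_irr.2 isIrr_one), hsum, map_one, one_apply] at hzero
  have hzq : z = algebraMap ℚ ℂ (-1 / q) := by
    rw [map_div₀, map_neg, map_one, map_natCast, eq_div_iff (by exact_mod_cast hq0)]
    push_cast at hzero
    linear_combination hzero
  rw [hzq, isIntegral_algebraMap_iff (algebraMap ℚ ℂ).injective] at hz
  obtain ⟨m, hm⟩ := IsIntegrallyClosed.isIntegral_iff.1 hz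
  rw [eq_div_iff hq0, eq_intCast] at hm
  have hmq : m * q = -1 := by exact_mod_cast hm
  have hdvd_one : (q : ℤ) ∣ 1 := ⟨-m, by linear_combination hmq⟩
  exact hq.one_lt.ne' (Nat.dvd_one.1 (by exact_mod_cast hdvd_one))

theorem center_eq_top_of_index_centralizer [IsSimpleGroup G] {g : G} (hg : g ≠ 1) {q k : ℕ}
    (hq : q.Prime) (hk : (Subgroup.centralizer {g}).index = q ^ k) : Subgroup.center G = ⊤ := by
  obtain ⟨χ, hχ, hne, h0, hdvd⟩ := exists_isIrr_not_dvd_deg hg hq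
  have hnorm : ‖χ g‖ = deg χ := norm_apply_eq_deg_of_isIntegral h0 <|
    hχ.isIntegral_div_deg_of_coprime <| by
      rw [card_conjClass, hk]
      exact ((Nat.Prime.coprime_iff_not_dvd hq).2 hdvd).pow_left k
  have hker : kernel χ = ⊥ := (Subgroup.Normal.eq_bot_or_eq_top inferInstance).resolve_right
    fun htop => by
      have hχ1 : χ = deg χ • 1 := by
        ext x
        rw [nsmul_apply, one_apply, mul_one, apply_eq_deg_of_mem_kernel (htop ▸ Subgroup.mem_top x)]
      refine hne (hχ.eq_of_mult_ne_zero isIrr_one ?_)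
      rw [hχ1, map_nsmul, AddMonoidHom.nsmul_apply, isIrr_one.mult_self, smul_eq_mul, mul_one]
      exact hχ.deg_pos.ne'
  refine (Subgroup.Normal.eq_bot_or_eq_top inferInstance).resolve_left fun hbot => hg ?_
  rw [← Subgroup.mem_bot, ← hbot, Subgroup.mem_center_iff]
  intro x
  have hcomm := commutatorElement_mem_kernel_of_norm_apply_eq_deg hnorm x
  rw [hker, Subgroup.mem_bot, commutatorElement_eq_one_iff_mul_comm] at hcomm
  exact hcomm.symm

theorem exists_eq_prime_pow_of_card_primeFactors_le_one {n : ℕ} (hn : n ≠ 0)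
    (h : n.primeFactors.card ≤ 1) : ∃ q k : ℕ, q.Prime ∧ n = q ^ k := by
  obtain h0 | h1 := Nat.le_one_iff_eq_zero_or_eq_one.1 h
  · have hn1 := (Nat.primeFactors_eq_empty.1 (Finset.card_eq_zero.1 h0)).resolve_left hn
    exact ⟨2, 0, Nat.prime_two, by rw [hn1, pow_zero]⟩
  · obtain ⟨q, k, hq, -, hk⟩ :=
      (isPrimePow_nat_iff n).1 (isPrimePow_iff_card_primeFactors_eq_one.2 h1)
    exact ⟨q, k, hq, hk.symm⟩

theorem exists_ne_one_not_dvd_index_centralizer {p : ℕ} [Fact p.Prime] (hp : p ∣ Nat.card G) :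
    ∃ g : G, g ≠ 1 ∧ ¬ p ∣ (Subgroup.centralizer {g}).index := by
  obtain ⟨P⟩ := (inferInstance : Nonempty (Sylow p G))
  have : Nontrivial P := (Subgroup.nontrivial_iff_ne_bot _).2 (P.ne_bot_of_dvd_card hp)
  have := P.isPGroup'.center_nontrivial
  obtain ⟨z, hz⟩ := exists_ne (1 : Subgroup.center P)
  refine ⟨(z : P), fun h => hz (Subtype.ext (Subtype.ext h)), fun hdvd =>
    P.not_dvd_index (hdvd.trans (Subgroup.index_dvd_of_le fun x hx => ?_))⟩
  rw [Subgroup.mem_centralizer_singleton_iff]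
  exact congrArg Subtype.val (Subgroup.mem_center_iff.1 z.2 ⟨x, hx⟩)

theorem center_eq_top_of_card_primeFactors_le_two [IsSimpleGroup G]
    (h : (Nat.card G).primeFactors.card ≤ 2) : Subgroup.center G = ⊤ := by
  obtain ⟨p, hp, hpG⟩ := Nat.exists_prime_and_dvd (Finite.one_lt_card (α := G)).ne'
  have := Fact.mk hp
  obtain ⟨g, hg, hpg⟩ := exists_ne_one_not_dvd_index_centralizer hpG
  have hcard : (Subgroup.centralizer {g}).index.primeFactors.card ≤ 1 := by
    have hsub : (Subgroup.centralizer {g}).index.primeFactors ⊆ (Nat.card G).primeFactors.erase p :=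
      Finset.subset_erase.2 ⟨Nat.primeFactors_mono (Subgroup.index_dvd_card _) Nat.card_pos.ne',
        mt Nat.dvd_of_mem_primeFactors hpg⟩
    have hmem := Nat.mem_primeFactors.2 ⟨hp, hpG, Nat.card_pos.ne'⟩
    have := Finset.card_le_card hsub
    rw [Finset.card_erase_of_mem hmem] at this
    omega
  obtain ⟨q, k, hq, hk⟩ :=
    exists_eq_prime_pow_of_card_primeFactors_le_one Subgroup.index_ne_zero_of_finite hcard
  exact center_eq_top_of_index_centralizer hg hq hk

theorem isSolvable_of_card_primeFactors_le_two (h : (Nat.card G).primeFactors.card ≤ 2) :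
    Group.IsSolvable G := by
  induction hn : Nat.card G using Nat.strong_induction_on generalizing G with
  | _ n ih =>
  have mono {m : ℕ} (hm : m ∣ Nat.card G) : m.primeFactors.card ≤ 2 :=
    (Finset.card_le_card (Nat.primeFactors_mono hm Nat.card_pos.ne')).trans h
  by_cases hK : ∃ K : Subgroup G, K.Normal ∧ K ≠ ⊥ ∧ K ≠ ⊤
  · obtain ⟨K, _, hbot, htop⟩ := hK
    have hmul := K.card_mul_index
    have hcard := (Subgroup.one_lt_card_iff_ne_bot K).2 hbot
    have hindex : 1 < K.index := Nat.one_lt_iff_ne_zero_and_ne_one.2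
      ⟨Subgroup.index_ne_zero_of_finite, mt Subgroup.index_eq_one.1 htop⟩
    rw [Group.isSolvable_iff_subgroup_quotient K]
    refine ⟨ih _ ?_ (mono K.card_subgroup_dvd_card) rfl,
      ih _ ?_ (mono K.card_quotient_dvd_card) rfl⟩
    · nlinarith
    · change K.index < n
      nlinarith
  · push Not at hK
    have hcenter : Subgroup.center G = ⊤ := by
      cases subsingleton_or_nontrivial G with
      | inl _ => exact Subsingleton.elim _ _
      | inr _ =>
        have : IsSimpleGroup G := ⟨fun K hKn => or_iff_not_imp_left.2 (hK K hKn)⟩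
        exact center_eq_top_of_card_primeFactors_le_two h
    exact Group.isSolvable_of_comm fun x y =>
      Subgroup.mem_center_iff.1 (hcenter ▸ Subgroup.mem_top y) x

end Burnside

/-! ### Characters of small degree of perfect groups -/

section Perfect

open Character

variable {G : Type} [Group G]

theorem Character.exists_trace_matrix (φ : Character G) {d : ℕ} (hd : deg φ = d) :
    ∃ M : G →* Matrix (Fin d) (Fin d) ℂ, ∀ g, φ g = (M g).trace := by
  obtain ⟨V, _, _, _, ρ, rfl⟩ := φ.exists_rep
  let b := finBasisOfFinrankEq ℂ V ((deg_ofRep ρ).symm.trans hd)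
  exact ⟨((LinearMap.toMatrixAlgEquiv b : _ →* _)).comp ρ, fun g =>
    LinearMap.trace_eq_matrix_trace ℂ b _⟩

section IsPerfect

variable [Group.IsPerfect G]

theorem eq_one_of_isPerfect {M : Type*} [CommMonoid M] (f : G →* M) : f = 1 := by
  ext g
  have hg : g ∈ f.toHomUnits.ker :=
    Abelianization.commutator_subset_ker _ (by simp)
  simpa using congrArg Units.val (MonoidHom.mem_ker.1 hg)

theorem det_eq_one_of_isPerfect {d : ℕ} (M : G →* Matrix (Fin d) (Fin d) ℂ) (g : G) :
    (M g).det = 1 :=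
  DFunLike.congr_fun (eq_one_of_isPerfect (Matrix.detMonoidHom.comp M)) g

namespace Character

theorem eq_one_of_deg_eq_one {φ : Character G} (hd : deg φ = 1) : φ = 1 := by
  obtain ⟨M, hM⟩ := φ.exists_trace_matrix hd
  ext g
  rw [hM, one_apply, ← det_eq_one_of_isPerfect M g, Matrix.trace_fin_one, Matrix.det_fin_one]

theorem altSq_eq_one {φ : Character G} (hd : deg φ = 2) : altSq φ = 1 := by
  obtain ⟨M, hM⟩ := φ.exists_trace_matrix hd
  ext g
  rw [altSq_apply, hM, hM, map_pow, one_apply, ← det_eq_one_of_isPerfect M g, Matrix.det_fin_two]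
  simp only [pow_two, Matrix.trace_fin_two, Matrix.mul_apply, Fin.sum_univ_two]
  ring

theorem altSq_eq_dual {φ : Character G} (hd : deg φ = 3) : altSq φ = dual φ := by
  obtain ⟨M, hM⟩ := φ.exists_trace_matrix hd
  ext g
  have adjugate_eq : (M g).adjugate = M g⁻¹ := by
    calc (M g).adjugate = (M g).adjugate * (M g * M g⁻¹) := by
          rw [← map_mul, mul_inv_cancel, map_one, mul_one]
      _ = M g⁻¹ := by
          rw [← mul_assoc, Matrix.adjugate_mul, det_eq_one_of_isPerfect, one_smul, one_mul]
  rw [altSq_apply, dual_apply, hM, hM, hM, ← adjugate_eq, map_pow, Matrix.adjugate_fin_three]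
  simp only [pow_two, Matrix.trace_fin_three, Matrix.mul_apply, Fin.sum_univ_three,
    Matrix.of_apply, Matrix.cons_val]
  ring

theorem norm_apply_eq_deg_of_deg_eq_two {φ : Character G} (hd : deg φ = 2) {z : G}
    (hz : z ^ 2 = 1) : ‖φ z‖ = deg φ := by
  have h : altSq φ z = 1 := by rw [altSq_eq_one hd, one_apply]
  rw [altSq_apply, hz, apply_one, hd] at h
  have hsq : φ z ^ 2 = 2 ^ 2 := by linear_combination 2 * h
  rw [hd]
  rcases sq_eq_sq_iff_eq_or_eq_neg.1 hsq with h | h <;> simp [h]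

theorem apply_eq_three_or_eq_neg_one {φ : Character G} (hd : deg φ = 3) {z : G}
    (hz : z ^ 2 = 1) : φ z = 3 ∨ φ z = -1 := by
  have h : altSq φ z = dual φ z := by rw [altSq_eq_dual hd]
  rw [altSq_apply, dual_apply, hz, apply_one, hd,
    inv_eq_of_mul_eq_one_right (by rwa [← pow_two])] at h
  have hroots : (φ z - 3) * (φ z + 1) = 0 := by
    push_cast at h
    linear_combination 2 * h
  exact (mul_eq_zero.1 hroots).imp sub_eq_zero.1 eq_neg_of_add_eq_zero_left

end Character

end IsPerfect

end Perfect

section OddOrder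

open Character

variable {G : Type} [Group G] [Finite G]

theorem mult_mul_dual_one {χ : Character G} (hχ : χ.IsIrr) : mult (χ * dual χ) 1 = 1 := by
  rw [mult_mul_left, dual_dual, one_mul, hχ.mult_self]

theorem mult_dual_right {φ : Character G} (h : dual φ = φ) (ψ : Character G) :
    mult φ (dual ψ) = mult φ ψ := by
  rw [← mult_dual, h, dual_dual]

theorem Character.IsIrr.exists_mul_dual_eq_one_add {χ : Character G} (hχ : χ.IsIrr) :
    ∃ τ, χ * dual χ = 1 + τ ∧ mult τ 1 = 0 ∧ dual τ = τ := by
  obtain ⟨τ, hτ⟩ := isIrr_one.exists_eq_add (mult_mul_dual_one hχ ▸ one_ne_zero)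
  refine ⟨τ, hτ, ?_, ?_⟩
  · have h := mult_mul_dual_one hχ
    rw [hτ, map_add, AddMonoidHom.add_apply, isIrr_one.mult_self] at h
    lia
  · have h : dual (χ * dual χ) = χ * dual χ := by rw [map_mul, dual_dual, mul_comm]
    rw [hτ, map_add, map_one] at h
    exact add_left_cancel h

theorem mult_symSq_one_eq_of_odd {φ : Character G} (ho : Odd (Nat.card G)) (h : mult φ 1 = 0) :
    mult (symSq φ) 1 = mult (altSq φ) 1 := by
  have := Fintype.ofFinite G
  have sum_sq : ∑ g, φ (g ^ 2) = ∑ g, φ g :=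
    (powCoprime (Nat.coprime_two_right.2 ho)).bijective.sum_comp (φ ·)
  have hφ := cast_mult φ 1
  rw [h, Nat.cast_zero] at hφ
  rw [← Nat.cast_inj (R := ℂ), cast_mult, cast_mult, ← sub_eq_zero, ← mul_sub,
    ← Finset.sum_sub_distrib, hφ]
  simp only [one_apply, mul_one]
  rw [← sum_sq]
  congr 1
  refine Finset.sum_congr rfl fun g _ => ?_
  rw [symSq_apply, altSq_apply]
  ring

/-- For real `χ`, the multiplicity `1` of the trivial character in `χ * χ` would be the sum of
its equal multiplicities in the symmetric and the alternating square. -/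
theorem Character.IsIrr.dual_ne_of_odd {χ : Character G} (hχ : χ.IsIrr) (ho : Odd (Nat.card G))
    (h1 : χ ≠ 1) : dual χ ≠ χ := by
  intro hreal
  have h := mult_mul_dual_one hχ
  rw [hreal, ← symSq_add_altSq, map_add, AddMonoidHom.add_apply,
    mult_symSq_one_eq_of_odd ho (hχ.mult_eq_zero isIrr_one h1)] at h
  lia

theorem even_deg_of_dual_eq {φ : Character G} (ho : Odd (Nat.card G)) (h1 : mult φ 1 = 0)
    (hreal : dual φ = φ) : Even (deg φ) := by
  rw [← ZMod.natCast_eq_zero_iff_even, deg_eq_sum, Nat.cast_sum]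
  refine Finset.sum_involution (fun χ _ => dual χ) (fun χ _ => ?_) (fun χ hχ hne hdual => ?_)
    (fun χ hχ => mem_irr.2 (mem_irr.1 hχ).dual) fun χ _ => dual_dual χ
  · rw [mult_dual_right hreal, deg_dual]
    exact CharTwo.add_self_eq_zero _
  · have hχ1 : χ ≠ 1 := by
      rintro rfl
      simp [h1] at hne
    exact (mem_irr.1 hχ).dual_ne_of_odd ho hχ1 hdual

theorem Character.IsIrr.odd_deg {χ : Character G} (hχ : χ.IsIrr) (ho : Odd (Nat.card G)) :
    Odd (deg χ) := by
  obtain ⟨τ, hτ, hτ1, hreal⟩ := hχ.exists_mul_dual_eq_one_add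
  have h := congrArg deg hτ
  rw [map_mul, deg_dual, map_add, map_one] at h
  have hodd : Odd (deg χ * deg χ) := h ▸ (even_deg_of_dual_eq ho hτ1 hreal).one_add
  exact (Nat.odd_mul.1 hodd).1

theorem Character.IsIrr.three_le_deg_of_odd [Group.IsPerfect G] {χ : Character G} (hχ : χ.IsIrr)
    (ho : Odd (Nat.card G)) (h1 : χ ≠ 1) : 3 ≤ deg χ := by
  have hne : deg χ ≠ 1 := mt eq_one_of_deg_eq_one h1
  obtain ⟨k, hk⟩ := hχ.odd_deg ho
  lia

/-- Such a character would be `α + dual α + γ` with `α` irreducible of odd degree at least `3`,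
leaving degree `2` for `γ`. -/
theorem deg_ne_eight_of_odd [Group.IsPerfect G] {φ : Character G} (ho : Odd (Nat.card G))
    (h1 : mult φ 1 = 0) (hreal : dual φ = φ) : deg φ ≠ 8 := by
  intro hd
  have ne_one {α : Character G} (h : mult φ α ≠ 0) : α ≠ 1 := by
    rintro rfl
    exact h h1
  have hφ : φ ≠ 0 := by
    rintro rfl
    simp at hd
  obtain ⟨α, hα, hαφ⟩ := exists_isIrr_mult_ne_zero hφ
  obtain ⟨β, rfl⟩ := hα.exists_eq_add hαφ
  have hβ : mult β (dual α) ≠ 0 := by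
    have h : mult (α + β) (dual α) ≠ 0 := by rwa [mult_dual_right hreal]
    rwa [map_add, AddMonoidHom.add_apply, hα.mult_eq_zero hα.dual
      (hα.dual_ne_of_odd ho (ne_one hαφ)).symm, zero_add] at h
  obtain ⟨γ, rfl⟩ := hα.dual.exists_eq_add hβ
  have hα3 := hα.three_le_deg_of_odd ho (ne_one hαφ)
  obtain ⟨k, hk⟩ := hα.odd_deg ho
  simp only [map_add, deg_dual] at hd
  have hγ : γ ≠ 0 := by
    rintro rfl
    simp at hd
    lia
  obtain ⟨δ, hδ, hδγ⟩ := exists_isIrr_mult_ne_zero hγ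
  have hδ1 : δ ≠ 1 := by
    refine ne_one ?_
    simp only [map_add, AddMonoidHom.add_apply]
    lia
  have hδ3 := hδ.three_le_deg_of_odd ho hδ1
  have hδγ := deg_le_of_mult_ne_zero hδ hδγ
  lia

theorem Character.IsIrr.even_card_of_deg_le_three [Group.IsPerfect G] {χ : Character G}
    (hχ : χ.IsIrr) (h1 : χ ≠ 1) (h3 : deg χ ≤ 3) : Even (Nat.card G) := by
  by_contra ho
  rw [Nat.not_even_iff_odd] at ho
  have hd : deg χ = 3 := h3.antisymm (hχ.three_le_deg_of_odd ho h1)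
  obtain ⟨τ, hτ, hτ1, hreal⟩ := hχ.exists_mul_dual_eq_one_add
  have hdeg := congrArg deg hτ
  rw [map_mul, deg_dual, map_add, map_one, hd] at hdeg
  exact deg_ne_eight_of_odd ho hτ1 hreal (by lia)

end OddOrder

/-! ### Nonabelian minimal normal subgroups -/

section MinimalNormal

open Character
open scoped commutatorElement

variable {G : Type} [Group G]

theorem eq_top_of_comap_center_eq_top [Group.IsPerfect G] {K : Subgroup G} [K.Normal]
    (h : (Subgroup.center (G ⧸ K)).comap (QuotientGroup.mk' K) = ⊤) : K = ⊤ := by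
  rw [eq_top_iff, ← Group.IsPerfect.commutator_eq_top, commutator_def, Subgroup.commutator_le]
  intro x _ y _
  have hx : QuotientGroup.mk' K x ∈ Subgroup.center (G ⧸ K) := by
    rw [← Subgroup.mem_comap, h]
    trivial
  rw [← QuotientGroup.ker_mk' K, MonoidHom.mem_ker, map_commutatorElement,
    commutatorElement_eq_one_iff_mul_comm]
  exact (Subgroup.mem_center_iff.1 hx _).symm

theorem mult_one_of_kernel_eq_top [Finite G] {φ : Character G} (h : kernel φ = ⊤) :
    mult φ 1 = deg φ := by
  have hφ : φ = deg φ • 1 := ext fun g => by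
    rw [apply_eq_deg_of_mem_kernel (h ▸ Subgroup.mem_top g), nsmul_apply, one_apply, mul_one]
  conv_lhs => rw [hφ]
  rw [map_nsmul, AddMonoidHom.smul_apply, isIrr_one.mult_self, smul_eq_mul, mul_one]

theorem Character.IsIrr.eq_one_of_kernel_eq_top [Finite G] {χ : Character G} (hχ : χ.IsIrr)
    (h : kernel χ = ⊤) : χ = 1 :=
  hχ.eq_of_mult_ne_zero isIrr_one (by
    rw [mult_one_of_kernel_eq_top h]
    exact hχ.deg_pos.ne')

/-- `N` is a nonabelian minimal normal subgroup of `G`. That `N ≠ ⊥` is part of `nonabelian`. -/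
structure IsNonabelianMinimalNormal (N : Subgroup G) : Prop where
  normal : N.Normal
  eq_bot_or_eq : ∀ K : Subgroup G, K.Normal → K ≤ N → K = ⊥ ∨ K = N
  nonabelian : ∃ x y : N, x * y ≠ y * x

namespace IsNonabelianMinimalNormal

variable {N : Subgroup G}

theorem isPerfect (hN : IsNonabelianMinimalNormal N) : Group.IsPerfect N := by
  have := hN.normal
  refine Subgroup.isPerfect_iff.2 ((hN.eq_bot_or_eq ⁅N, N⁆ inferInstance
    (Subgroup.commutator_le_left _ _)).resolve_left fun h => ?_)
  obtain ⟨x, y, hxy⟩ := hN.nonabelian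
  refine hxy (Subtype.ext ?_)
  have hmem := Subgroup.commutator_mem_commutator x.2 y.2
  rwa [h, Subgroup.mem_bot, commutatorElement_eq_one_iff_mul_comm] at hmem

theorem eq_top_of_forall_conj_mem (hN : IsNonabelianMinimalNormal N) {z : N} (hz : z ≠ 1)
    {K : Subgroup N} (h : ∀ (g : G) (n : N), (n : G) = g * z * g⁻¹ → n ∈ K) : K = ⊤ := by
  have := hN.normal
  have closure_eq : Subgroup.normalClosure {(z : G)} = N := by
    refine (hN.eq_bot_or_eq _ inferInstance
      (Subgroup.normalClosure_le_normal (by simp))).resolve_left fun hbot => hz ?_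
    simpa using Subgroup.normalClosure_eq_bot_iff.1 hbot
  have closure_le : Subgroup.normalClosure {(z : G)} ≤ K.map N.subtype := by
    refine (Subgroup.closure_le _).2 fun x hx => ?_
    obtain ⟨_, rfl, hconj⟩ := Group.mem_conjugatesOfSet_iff.1 hx
    obtain ⟨g, rfl⟩ := isConj_iff.1 hconj
    exact ⟨⟨g * z * g⁻¹, this.conj_mem _ z.2 g⟩, h g _ rfl, rfl⟩
  rw [closure_eq] at closure_le
  refine eq_top_iff.2 fun n _ => ?_
  obtain ⟨k, hk, hkn⟩ := closure_le n.2
  rwa [← N.subtype_injective hkn]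

theorem eq_top_of_forall_involution_mem (hN : IsNonabelianMinimalNormal N) {z : N} (hz1 : z ≠ 1)
    (hz : z ^ 2 = 1) {K : Subgroup N} (h : ∀ y : N, y ^ 2 = 1 → y ∈ K) : K = ⊤ :=
  hN.eq_top_of_forall_conj_mem hz1 fun g n hn => h n (Subtype.ext (by
    rw [Subgroup.coe_pow, hn, conj_pow, ← Subgroup.coe_pow, hz, Subgroup.coe_one, mul_one,
      mul_inv_cancel]))

variable [Finite G]

theorem disjoint_kernel (hN : IsNonabelianMinimalNormal N) {φ : Character G}
    (h1 : relMult N φ 1 = 0) (h0 : φ ≠ 0) : Disjoint (kernel φ) N := by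
  have := hN.normal
  refine disjoint_iff.2 ((hN.eq_bot_or_eq (kernel φ ⊓ N) inferInstance
    inf_le_right).resolve_right fun h => h0 ?_)
  rw [relMult_apply, restrict_eq_deg_nsmul_one (inf_eq_right.1 h), map_nsmul,
    map_one (restrict N), AddMonoidHom.smul_apply, isIrr_one.mult_self, smul_eq_mul, mul_one] at h1
  exact deg_eq_zero.1 h1

theorem exists_involution (hN : IsNonabelianMinimalNormal N) {θ : Character N} (hθ : θ.IsIrr)
    (h1 : θ ≠ 1) (h3 : deg θ ≤ 3) : ∃ z : N, z ≠ 1 ∧ z ^ 2 = 1 := by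
  have := hN.isPerfect
  have := Fact.mk Nat.prime_two
  obtain ⟨z, hz⟩ := exists_prime_orderOf_dvd_card' 2
    (hθ.even_card_of_deg_le_three h1 h3).two_dvd
  exact ⟨z, fun h => by simp [h] at hz, hz ▸ pow_orderOf_eq_one z⟩

/-- All `G`-conjugates of an involution of `N` would be scalar in a representation of `N` of
degree `2`, hence so would all of `N`. -/
theorem deg_ne_two (hN : IsNonabelianMinimalNormal N) {θ : Character N} (hθ : θ.IsIrr) :
    deg θ ≠ 2 := by
  intro hd
  have := hN.isPerfect
  have hθ1 : θ ≠ 1 := by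
    rintro rfl
    simp at hd
  obtain ⟨z, hz1, hz⟩ := hN.exists_involution hθ hθ1 (by lia)
  have scalar_eq_top :
      (Subgroup.center (N ⧸ kernel θ)).comap (QuotientGroup.mk' (kernel θ)) = ⊤ := by
    refine hN.eq_top_of_forall_involution_mem hz1 hz fun n hn => ?_
    refine Subgroup.mem_comap.2 (Subgroup.mem_center_iff.2 fun x => ?_)
    obtain ⟨x, rfl⟩ := QuotientGroup.mk'_surjective _ x
    have hker := commutatorElement_mem_kernel_of_norm_apply_eq_deg
      (norm_apply_eq_deg_of_deg_eq_two hd hn) x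
    rw [← QuotientGroup.ker_mk' (kernel θ), MonoidHom.mem_ker, map_commutatorElement,
      commutatorElement_eq_one_iff_mul_comm] at hker
    exact hker.symm
  exact hθ1 (hθ.eq_one_of_kernel_eq_top (eq_top_of_comap_center_eq_top scalar_eq_top))

theorem three_le_deg (hN : IsNonabelianMinimalNormal N) {θ : Character N} (hθ : θ.IsIrr)
    (h1 : θ ≠ 1) : 3 ≤ deg θ := by
  have := hN.isPerfect
  have := hθ.deg_pos
  have := hN.deg_ne_two hθ
  have : deg θ ≠ 1 := mt eq_one_of_deg_eq_one h1
  lia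

theorem three_le_deg_of_mult_one_eq_zero (hN : IsNonabelianMinimalNormal N) {θ : Character N}
    (h1 : mult θ 1 = 0) (h0 : θ ≠ 0) : 3 ≤ deg θ := by
  obtain ⟨χ, hχ, hm⟩ := exists_isIrr_mult_ne_zero h0
  refine (hN.three_le_deg hχ ?_).trans (deg_le_of_mult_ne_zero hχ hm)
  rintro rfl
  exact hm h1

section Small

variable {φ : Character G} (hN : IsNonabelianMinimalNormal N) (h1 : relMult N φ 1 = 0)
include hN h1

theorem relMult_self_le : relMult N φ φ ≤ (deg φ / 3) ^ 2 := by
  rw [← deg_comap N.subtype φ]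
  refine mult_self_le_sq three_pos fun θ hθ hm => hN.three_le_deg hθ ?_
  rintro rfl
  exact hm (by rwa [relMult_apply, map_one] at h1)

theorem three_le_deg_of_relMult_one_eq_zero (h0 : φ ≠ 0) : 3 ≤ deg φ := by
  rw [relMult_apply, map_one] at h1
  rw [← deg_comap N.subtype φ]
  exact hN.three_le_deg_of_mult_one_eq_zero h1 (mt restrict_eq_zero.1 h0)

theorem relMult_self_of_deg_le_five (h0 : φ ≠ 0) (h5 : deg φ ≤ 5) : relMult N φ φ = 1 := by
  have hle := hN.relMult_self_le h1
  have hpos := relMult_self_pos N h0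
  have := Nat.pow_le_pow_left (show deg φ / 3 ≤ 1 by lia) 2
  lia

theorem exists_involution_of_deg_eq_three (hd : deg φ = 3) : ∃ z : N, z ≠ 1 ∧ z ^ 2 = 1 := by
  have h0 : φ ≠ 0 := by
    rintro rfl
    simp at hd
  refine hN.exists_involution (θ := restrict N φ)
    (isIrr_iff_mult_self.2 (hN.relMult_self_of_deg_le_five h1 h0 (by lia))) ?_
    ((deg_comap _ _).trans hd).le
  intro h
  have := (deg_comap N.subtype φ).symm.trans (congrArg deg h)
  rw [hd, map_one] at this
  lia

theorem apply_eq_neg_one (hd : deg φ = 3) {z : N} (hz1 : z ≠ 1) (hz : z ^ 2 = 1) :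
    φ z = -1 := by
  have := hN.isPerfect
  have h0 : φ ≠ 0 := by
    rintro rfl
    simp at hd
  refine (apply_eq_three_or_eq_neg_one (φ := restrict N φ) ((deg_comap _ _).trans hd)
    hz).resolve_left fun h3 => hz1 (Subtype.ext ?_)
  refine (Subgroup.disjoint_def.1 (hN.disjoint_kernel h1 h0)) ?_ z.2
  apply mem_kernel_of_apply_eq_deg
  rw [hd]
  exact_mod_cast h3

end Small

end IsNonabelianMinimalNormal

end MinimalNormal

/-! ### Clifford classes and their weights -/

section CliffordClass

open Character

variable {G : Type} [Group G] [Finite G]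

/-- The irreducible characters whose restriction to `N` has a constituent in common with that of
`φ`. For normal `N` these are classes of an equivalence relation on the irreducible characters,
and the class of `1` consists of the irreducible characters that are trivial on `N`. -/
noncomputable def cliffordClass (N : Subgroup G) (φ : Character G) : Finset (Character G) :=
  (irr G).filter fun χ => relMult N χ φ ≠ 0

/-- The contribution to `∑ χ, (5 * deg χ - 16)` of the Clifford class of an irreducible character
`W` of least degree in it is at least `weight N W` per irreducible character trivial on `N`. -/
noncomputable def weight (N : Subgroup G) (W : Character G) : ℝ :=
  (5 * deg W - 16) / relMult N W W

variable {N : Subgroup G}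

theorem mem_cliffordClass {φ χ : Character G} :
    χ ∈ cliffordClass N φ ↔ χ.IsIrr ∧ relMult N χ φ ≠ 0 := by
  rw [cliffordClass, Finset.mem_filter, mem_irr]

theorem sum_cliffordClass_relMult (N : Subgroup G) (φ : Character G) :
    ∑ χ ∈ cliffordClass N φ, relMult N χ φ = ∑ χ ∈ irr G, relMult N χ φ :=
  Finset.sum_filter_ne_zero _

theorem weight_eq_of_relMult_self {W : Character G} (h : relMult N W W = 1) :
    weight N W = 5 * deg W - 16 := by
  rw [weight, h, Nat.cast_one, div_one]

theorem weight_nonneg {W : Character G} (h4 : 4 ≤ deg W) : 0 ≤ weight N W := by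
  have h : (4 : ℝ) ≤ deg W := by exact_mod_cast h4
  exact div_nonneg (by linarith) (Nat.cast_nonneg _)

variable [N.Normal]

theorem cliffordClass_eq_of_relMult_ne_zero {χ ψ : Character G} (hχ : χ.IsIrr) (hψ : ψ.IsIrr)
    (h : relMult N χ ψ ≠ 0) : cliffordClass N χ = cliffordClass N ψ := by
  ext U
  rw [mem_cliffordClass, mem_cliffordClass]
  exact and_congr_right fun hU => ⟨fun hUχ => hU.relMult_ne_zero_trans hχ hUχ h,
    fun hUψ => hU.relMult_ne_zero_trans hψ hUψ (relMult_comm N χ ψ ▸ h)⟩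

variable (N) in
theorem permChar_quotient_eq_sum :
    permChar G (G ⧸ N) = ∑ ψ ∈ cliffordClass N 1, deg ψ • ψ := by
  conv_lhs => rw [(permChar G (G ⧸ N)).eq_sum_mult]
  rw [cliffordClass, Finset.sum_filter]
  refine Finset.sum_congr rfl fun ψ hψ => ?_
  rw [← mul_one (permChar G (G ⧸ N)), mult_permChar_mul ((1 : G) : G ⧸ N),
    MulAction.stabilizer_quotient, relMult_comm]
  split_ifs with h
  · rw [(mem_irr.1 hψ).relMult_eq_of_relMult_one_ne_zero h, relMult_one_one, mul_one]
  · rw [not_not.1 h, zero_smul]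

theorem relMult_eq_sum_cliffordClass_one (φ χ : Character G) :
    relMult N φ χ = ∑ ψ ∈ cliffordClass N 1, deg ψ * mult (ψ * φ) χ := by
  have h := mult_permChar_mul ((1 : G) : G ⧸ N) φ χ
  rw [MulAction.stabilizer_quotient, permChar_quotient_eq_sum, Finset.sum_mul, map_sum,
    AddMonoidHom.finsetSum_apply] at h
  rw [← h]
  refine Finset.sum_congr rfl fun ψ _ => ?_
  rw [smul_mul_assoc, map_nsmul, AddMonoidHom.smul_apply, smul_eq_mul]

theorem card_cliffordClass_one_le {W : Character G} (hW : W ≠ 0) :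
    (cliffordClass N 1).card ≤ ∑ χ ∈ cliffordClass N W, relMult N χ W := by
  simp_rw [sum_cliffordClass_relMult, relMult_comm N _ W, relMult_eq_sum_cliffordClass_one]
  rw [Finset.sum_comm, Finset.card_eq_sum_ones]
  refine Finset.sum_le_sum fun ψ hψ => ?_
  have hψ := (mem_cliffordClass.1 hψ).1
  have hdeg : deg (ψ * W) ≠ 0 := by
    rw [map_mul]
    exact mul_ne_zero hψ.deg_pos.ne' (mt deg_eq_zero.1 hW)
  obtain ⟨χ, hχ, hm⟩ := exists_isIrr_mult_ne_zero (mt deg_eq_zero.2 hdeg)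
  exact (Nat.one_le_iff_ne_zero.2 (mul_ne_zero hψ.deg_pos.ne' hm)).trans
    (Finset.single_le_sum (f := fun χ => deg ψ * mult (ψ * W) χ) (fun _ _ => Nat.zero_le _)
      (mem_irr.2 hχ))

theorem weight_mul_relMult_le {W χ : Character G} (hW : W.IsIrr) (hχ : χ ∈ cliffordClass N W)
    (hmin : deg W ≤ deg χ) : weight N W * relMult N χ W ≤ 5 * deg χ - 16 := by
  obtain ⟨hχ, hχW⟩ := mem_cliffordClass.1 hχ
  have hd : (0 : ℝ) < deg W := by exact_mod_cast hW.deg_pos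
  have he : (0 : ℝ) < relMult N W W := by exact_mod_cast relMult_self_pos N hW.ne_zero
  have hle : (deg W : ℝ) ≤ deg χ := by exact_mod_cast hmin
  have hrel : (deg W * relMult N χ W : ℝ) = deg χ * relMult N W W := by
    exact_mod_cast hχ.deg_mul_relMult_comm hW hχW W
  rw [weight, div_mul_eq_mul_div, div_le_iff₀ he]
  refine le_of_mul_le_mul_left ?_ hd
  calc (deg W * ((5 * deg W - 16) * relMult N χ W) : ℝ)
      = (5 * deg W - 16) * (deg W * relMult N χ W) := by ring
    _ = (5 * deg W * deg χ - 16 * deg χ) * relMult N W W := by rw [hrel]; ring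
    _ ≤ (5 * deg W * deg χ - 16 * deg W) * relMult N W W := by gcongr
    _ = deg W * ((5 * deg χ - 16) * relMult N W W) := by ring

theorem weight_mul_card_le_sum {W : Character G} (hW : W.IsIrr)
    (hmin : ∀ χ ∈ cliffordClass N W, deg W ≤ deg χ) (h4 : 4 ≤ deg W) :
    weight N W * (cliffordClass N 1).card ≤ ∑ χ ∈ cliffordClass N W, (5 * deg χ - 16 : ℝ) := by
  have hcard : ((cliffordClass N 1).card : ℝ) ≤ ∑ χ ∈ cliffordClass N W, (relMult N χ W : ℝ) := by
    exact_mod_cast card_cliffordClass_one_le hW.ne_zero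
  calc weight N W * (cliffordClass N 1).card
      ≤ weight N W * ∑ χ ∈ cliffordClass N W, (relMult N χ W : ℝ) :=
        mul_le_mul_of_nonneg_left hcard (weight_nonneg h4)
    _ ≤ ∑ χ ∈ cliffordClass N W, (5 * deg χ - 16 : ℝ) := by
        rw [Finset.mul_sum]
        exact Finset.sum_le_sum fun χ hχ => weight_mul_relMult_le hW hχ (hmin χ hχ)

theorem exists_eq_mul_of_deg_eq {W χ : Character G} (hW : W.IsIrr) (h1 : relMult N W W = 1)
    (hχ : χ ∈ cliffordClass N W) (hd : deg χ = deg W) :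
    ∃ ψ ∈ cliffordClass N 1, ψ * W = χ := by
  obtain ⟨hχ, hχW⟩ := mem_cliffordClass.1 hχ
  have hrel : relMult N W χ = 1 := by
    have h := hχ.deg_mul_relMult_comm hW hχW W
    rw [h1, hd] at h
    rw [relMult_comm]
    exact Nat.eq_of_mul_eq_mul_left hW.deg_pos h
  rw [relMult_eq_sum_cliffordClass_one] at hrel
  obtain ⟨ψ, hψ, hne⟩ := Finset.exists_ne_zero_of_sum_ne_zero (hrel ▸ one_ne_zero)
  have hle := Finset.single_le_sum (f := fun ψ => deg ψ * mult (ψ * W) χ)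
    (fun _ _ => Nat.zero_le _) hψ
  have hψ1 : deg ψ = 1 := Nat.eq_one_of_mul_eq_one_right
    ((hle.trans hrel.le).antisymm (Nat.one_le_iff_ne_zero.2 hne))
  obtain ⟨τ, hτ⟩ := hχ.exists_eq_add (right_ne_zero_of_mul hne)
  have hdeg := congrArg deg hτ
  rw [map_mul, hψ1, one_mul, map_add, hd, left_eq_add, deg_eq_zero] at hdeg
  exact ⟨ψ, hψ, by rw [hτ, hdeg, add_zero]⟩

theorem neg_card_le_sum {W : Character G} (hW : W.IsIrr)
    (hmin : ∀ χ ∈ cliffordClass N W, deg W ≤ deg χ) (h3 : deg W = 3) (h1 : relMult N W W = 1) :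
    -((cliffordClass N 1).card : ℝ) ≤ ∑ χ ∈ cliffordClass N W, (5 * deg χ - 16 : ℝ) := by
  classical
  have hcard : ((cliffordClass N W).filter fun χ => deg χ = 3).card ≤ (cliffordClass N 1).card := by
    refine (Finset.card_le_card fun χ hχ => ?_).trans
      (Finset.card_image_le (f := fun ψ => ψ * W))
    obtain ⟨hχ, hd⟩ := Finset.mem_filter.1 hχ
    exact Finset.mem_image.2 (exists_eq_mul_of_deg_eq hW h1 hχ (hd.trans h3.symm))
  calc -((cliffordClass N 1).card : ℝ)
      ≤ -((cliffordClass N W).filter fun χ => deg χ = 3).card := by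
        exact neg_le_neg (by exact_mod_cast hcard)
    _ = ∑ χ ∈ cliffordClass N W, if deg χ = 3 then (-1 : ℝ) else 0 := by
        rw [← Finset.sum_filter, Finset.sum_const, nsmul_eq_mul, mul_neg_one]
    _ ≤ ∑ χ ∈ cliffordClass N W, (5 * deg χ - 16 : ℝ) := by
        refine Finset.sum_le_sum fun χ hχ => ?_
        have h3χ : 3 ≤ deg χ := h3 ▸ hmin χ hχ
        split_ifs with h
        · rw [h]
          norm_num
        · have h4 : (4 : ℝ) ≤ deg χ := by exact_mod_cast Nat.lt_of_le_of_ne h3χ (Ne.symm h)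
          linarith

end CliffordClass

section MinimalTransversal

open Character

variable {G : Type} [Group G] [Finite G]

/-- `M` consists of one irreducible character of least degree from each Clifford class of
irreducible characters that are nontrivial on `N`. -/
structure IsMinimalTransversal (N : Subgroup G) (M : Finset (Character G)) : Prop where
  isIrr : ∀ W ∈ M, W.IsIrr
  relMult_one : ∀ W ∈ M, relMult N W 1 = 0
  deg_le : ∀ W ∈ M, ∀ χ ∈ cliffordClass N W, deg W ≤ deg χ
  eq_of_relMult_ne_zero : ∀ W ∈ M, ∀ W' ∈ M, relMult N W W' ≠ 0 → W = W'
  exists_relMult_ne_zero : ∀ χ : Character G, χ.IsIrr → relMult N χ 1 = 0 →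
    ∃ W ∈ M, relMult N χ W ≠ 0

variable {N : Subgroup G} {M : Finset (Character G)}

namespace IsMinimalTransversal

theorem three_le_deg (hM : IsMinimalTransversal N M) (hN : IsNonabelianMinimalNormal N)
    {W : Character G} (hW : W ∈ M) : 3 ≤ deg W :=
  hN.three_le_deg_of_relMult_one_eq_zero (hM.relMult_one W hW) (hM.isIrr W hW).ne_zero

theorem relMult_self (hM : IsMinimalTransversal N M) (hN : IsNonabelianMinimalNormal N)
    {W : Character G} (hW : W ∈ M) (h5 : deg W ≤ 5) : relMult N W W = 1 :=
  hN.relMult_self_of_deg_le_five (hM.relMult_one W hW) (hM.isIrr W hW).ne_zero h5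

theorem weight_eq (hM : IsMinimalTransversal N M) (hN : IsNonabelianMinimalNormal N)
    {W : Character G} (hW : W ∈ M) (h5 : deg W ≤ 5) : weight N W = 5 * deg W - 16 :=
  weight_eq_of_relMult_self (hM.relMult_self hN hW h5)

theorem weight_eq_neg_one (hM : IsMinimalTransversal N M) (hN : IsNonabelianMinimalNormal N)
    {W : Character G} (hW : W ∈ M) (h3 : deg W = 3) : weight N W = -1 := by
  rw [hM.weight_eq hN hW (by lia), h3]
  norm_num

theorem weight_eq_four (hM : IsMinimalTransversal N M) (hN : IsNonabelianMinimalNormal N)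
    {W : Character G} (hW : W ∈ M) (h4 : deg W = 4) : weight N W = 4 := by
  rw [hM.weight_eq hN hW (by lia), h4]
  norm_num

theorem weight_eq_nine (hM : IsMinimalTransversal N M) (hN : IsNonabelianMinimalNormal N)
    {W : Character G} (hW : W ∈ M) (h5 : deg W = 5) : weight N W = 9 := by
  rw [hM.weight_eq hN hW h5.le, h5]
  norm_num

end IsMinimalTransversal

variable [N.Normal]

variable (N) in
theorem exists_isMinimalTransversal : ∃ M, IsMinimalTransversal N M := by
  classical
  have exists_min (s : Finset (Character G)) :
      ∃ W, s.Nonempty → W ∈ s ∧ ∀ U ∈ s, deg W ≤ deg U := by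
    by_cases hs : s.Nonempty
    · obtain ⟨W, hW⟩ := s.exists_min_image deg hs
      exact ⟨W, fun _ => hW⟩
    · exact ⟨0, fun h => absurd h hs⟩
  choose r hr using exists_min
  have r_mem {χ : Character G} (hχ : χ.IsIrr) :=
    hr (cliffordClass N χ) ⟨χ, mem_cliffordClass.2 ⟨hχ, (relMult_self_pos N hχ.ne_zero).ne'⟩⟩
  have r_irr {χ : Character G} (hχ : χ.IsIrr) := mem_cliffordClass.1 (r_mem hχ).1
  have r_class {χ : Character G} (hχ : χ.IsIrr) :=
    cliffordClass_eq_of_relMult_ne_zero (r_irr hχ).1 hχ (r_irr hχ).2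
  have mem_image {W : Character G}
      (hW : W ∈ ((irr G).filter (relMult N · 1 = 0)).image fun χ => r (cliffordClass N χ)) :
      ∃ χ : Character G, χ.IsIrr ∧ relMult N χ 1 = 0 ∧ r (cliffordClass N χ) = W := by
    simpa [mem_irr, and_assoc] using hW
  refine ⟨_, fun W hW => ?_, fun W hW => ?_, fun W hW => ?_, fun W hW W' hW' hWW' => ?_,
    fun χ hχ h1 => ⟨_, Finset.mem_image_of_mem _ (Finset.mem_filter.2 ⟨mem_irr.2 hχ, h1⟩),
      relMult_comm N _ χ ▸ (r_irr hχ).2⟩⟩ <;>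
  obtain ⟨χ, hχ, h1, rfl⟩ := mem_image hW
  · exact (r_irr hχ).1
  · by_contra hne
    exact hχ.relMult_ne_zero_trans (r_irr hχ).1 (relMult_comm N _ χ ▸ (r_irr hχ).2) hne h1
  · rw [r_class hχ]
    exact (r_mem hχ).2
  · obtain ⟨χ', hχ', -, rfl⟩ := mem_image hW'
    have h := cliffordClass_eq_of_relMult_ne_zero (r_irr hχ).1 (r_irr hχ').1 hWW'
    rw [r_class hχ, r_class hχ'] at h
    rw [h]

namespace IsMinimalTransversal

theorem weight_mul_card_le_sum (hM : IsMinimalTransversal N M)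
    (hN : IsNonabelianMinimalNormal N) {W : Character G} (hW : W ∈ M) :
    weight N W * (cliffordClass N 1).card ≤ ∑ χ ∈ cliffordClass N W, (5 * deg χ - 16 : ℝ) := by
  rcases (hM.three_le_deg hN hW).eq_or_lt' with h3 | h4
  · rw [hM.weight_eq_neg_one hN hW h3, neg_one_mul]
    exact neg_card_le_sum (hM.isIrr W hW) (hM.deg_le W hW) h3
      (hM.relMult_self hN hW (by lia))
  · exact AverageCharacterDegree.weight_mul_card_le_sum (hM.isIrr W hW) (hM.deg_le W hW) h4

theorem sum_irr_eq {R : Type*} [AddCommMonoid R] (hM : IsMinimalTransversal N M)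
    (f : Character G → R) :
    ∑ χ ∈ irr G, f χ =
      ∑ χ ∈ cliffordClass N 1, f χ + ∑ W ∈ M, ∑ χ ∈ cliffordClass N W, f χ := by
  classical
  have biUnion_eq :
      (irr G).filter (fun χ => ¬ relMult N χ 1 ≠ 0) = M.biUnion (cliffordClass N) := by
    ext χ
    simp only [Finset.mem_filter, Finset.mem_biUnion, mem_irr, mem_cliffordClass, not_not]
    refine ⟨fun ⟨hχ, h1⟩ => ?_, fun ⟨W, hW, hχ, hχW⟩ => ⟨hχ, ?_⟩⟩
    · obtain ⟨W, hW, hχW⟩ := hM.exists_relMult_ne_zero χ hχ h1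
      exact ⟨W, hW, hχ, hχW⟩
    · by_contra hne
      exact (hM.isIrr W hW).relMult_ne_zero_trans hχ (relMult_comm N χ W ▸ hχW) hne
        (hM.relMult_one W hW)
  rw [← Finset.sum_filter_add_sum_filter_not (irr G) (fun χ => relMult N χ 1 ≠ 0), biUnion_eq,
    Finset.sum_biUnion fun W hW W' hW' hne => Finset.disjoint_left.2 fun χ hχ hχ' => hne ?_]
  · rfl
  · obtain ⟨hχ, hχW⟩ := mem_cliffordClass.1 hχ
    exact hM.eq_of_relMult_ne_zero W hW W' hW' ((hM.isIrr W hW).relMult_ne_zero_trans hχ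
      (relMult_comm N χ W ▸ hχW) (mem_cliffordClass.1 hχ').2)

/-- The irreducible characters trivial on `N` contribute at least `5 - 16 = -11` each. -/
theorem sum_irr_nonneg (hM : IsMinimalTransversal N M) (hN : IsNonabelianMinimalNormal N)
    (h : 11 ≤ ∑ W ∈ M, weight N W) : 0 ≤ ∑ χ ∈ irr G, (5 * deg χ - 16 : ℝ) := by
  have h_one : (cliffordClass N 1).card • (-11 : ℝ) ≤
      ∑ χ ∈ cliffordClass N 1, (5 * deg χ - 16 : ℝ) :=
    Finset.card_nsmul_le_sum _ _ _ fun ψ hψ => by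
      have hψ : (1 : ℝ) ≤ deg ψ := by exact_mod_cast (mem_cliffordClass.1 hψ).1.deg_pos
      linarith
  have h_rest : (∑ W ∈ M, weight N W) * (cliffordClass N 1).card ≤
      ∑ W ∈ M, ∑ χ ∈ cliffordClass N W, (5 * deg χ - 16 : ℝ) := by
    rw [Finset.sum_mul]
    exact Finset.sum_le_sum fun W hW => hM.weight_mul_card_le_sum hN hW
  have h_weight := mul_le_mul_of_nonneg_right h (Nat.cast_nonneg (cliffordClass N 1).card)
  rw [nsmul_eq_mul] at h_one
  rw [hM.sum_irr_eq]
  linarith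

end IsMinimalTransversal

end MinimalTransversal

/-! ### Restrictions of characters of small degree -/

section Restrict

open Character

variable {G : Type} [Group G] [Finite G] {N : Subgroup G} {φ ψ χ : Character G}

theorem isIrr_restrict (h : relMult N φ φ = 1) : (restrict N φ).IsIrr :=
  isIrr_iff_mult_self.2 h

theorem restrict_eq_of_relMult_ne_zero (hφ : relMult N φ φ = 1) (hψ : relMult N ψ ψ = 1)
    (h : relMult N φ ψ ≠ 0) : restrict N φ = restrict N ψ :=
  (isIrr_restrict hφ).eq_of_mult_ne_zero (isIrr_restrict hψ) h

theorem relMult_eq_zero_of_deg_ne (hφ : relMult N φ φ = 1) (hψ : relMult N ψ ψ = 1)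
    (h : deg φ ≠ deg ψ) : relMult N φ ψ = 0 := by
  by_contra hne
  refine h ?_
  rw [← deg_comap N.subtype φ, restrict_eq_of_relMult_ne_zero hφ hψ hne, deg_comap]

theorem relMult_le_one (hφ : relMult N φ φ = 1) (hψ : relMult N ψ ψ = 1) :
    relMult N φ ψ ≤ 1 := by
  by_cases h : relMult N φ ψ = 0
  · rw [h]
    exact zero_le_one
  · rw [relMult_apply, restrict_eq_of_relMult_ne_zero hφ hψ h, ← relMult_apply, hψ]

theorem exists_restrict_eq_sum_add {s : Finset (Character G)} (hs : ∀ W ∈ s, relMult N W W = 1)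
    (hdisj : ∀ W ∈ s, ∀ W' ∈ s, relMult N W W' ≠ 0 → W = W') (φ : Character G) :
    ∃ τ, restrict N φ = ∑ W ∈ s, relMult N φ W • restrict N W + τ := by
  classical
  have injOn : Set.InjOn (restrict N) s := fun W hW W' hW' h => hdisj W hW W' hW' (by
    rw [relMult_apply, ← h, ← relMult_apply, hs W hW]
    exact one_ne_zero)
  have image_subset : s.image (restrict N) ⊆ irr N := fun θ hθ => by
    obtain ⟨W, hW, rfl⟩ := Finset.mem_image.1 hθ
    exact mem_irr.2 (isIrr_restrict (hs W hW))
  refine ⟨∑ θ ∈ irr N \ s.image (restrict N), mult (restrict N φ) θ • θ, ?_⟩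
  simp_rw [relMult_apply]
  rw [← Finset.sum_image (f := fun θ => mult (restrict N φ) θ • θ) injOn, add_comm,
    Finset.sum_sdiff image_subset]
  exact (restrict N φ).eq_sum_mult

theorem sum_relMult_mul_deg_le {s : Finset (Character G)} (hs : ∀ W ∈ s, relMult N W W = 1)
    (hdisj : ∀ W ∈ s, ∀ W' ∈ s, relMult N W W' ≠ 0 → W = W') (φ : Character G) :
    ∑ W ∈ s, relMult N φ W * deg W ≤ deg φ := by
  obtain ⟨τ, hτ⟩ := exists_restrict_eq_sum_add hs hdisj φ
  have h := congrArg deg hτ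
  simp only [map_add, map_sum, map_nsmul, deg_comap, smul_eq_mul] at h
  lia

variable [N.Normal]

theorem Character.IsIrr.restrict_eq_of_deg_eq (hχ : χ.IsIrr) (hψ : ψ.IsIrr)
    (h : relMult N χ ψ ≠ 0) (hd : deg χ = deg ψ) : restrict N χ = restrict N ψ := by
  have heq := hχ.deg_nsmul_restrict_comm hψ h
  have h0 : (deg ψ : ℂ) ≠ 0 := Nat.cast_ne_zero.2 hψ.deg_pos.ne'
  ext n
  have hn := congrArg (fun θ : Character N => θ n) heq
  simp only [hd, nsmul_apply] at hn
  exact mul_left_cancel₀ h0 hn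

theorem exists_restrict_eq_add (hψ : relMult N ψ ψ = 1) (h : relMult N φ ψ = 1) :
    ∃ τ : Character G, restrict N φ = restrict N ψ + restrict N τ := by
  obtain ⟨χ, hχ, hφχ, hχψ⟩ := exists_isIrr_relMult_ne_zero (h ▸ one_ne_zero)
  have hψirr := isIrr_of_relMult_self hψ
  have hχψ1 : relMult N χ ψ = 1 :=
    ((relMult_le_of_mult_ne_zero hχ hφχ ψ).trans h.le).antisymm (Nat.one_le_iff_ne_zero.2 hχψ)
  have hd := hχ.deg_mul_relMult_comm hψirr hχψ ψ
  rw [hχψ1, hψ, mul_one, mul_one] at hd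
  obtain ⟨τ, rfl⟩ := hχ.exists_eq_add hφχ
  exact ⟨τ, by rw [map_add, hχ.restrict_eq_of_deg_eq hψirr hχψ hd.symm]⟩

end Restrict

namespace IsMinimalTransversal

open Character

variable {G : Type} [Group G] [Finite G] {N : Subgroup G} [N.Normal]
  {M : Finset (Character G)} {W φ : Character G}

theorem exists_restrict_eq (hM : IsMinimalTransversal N M) (hφ : φ.IsIrr)
    (h1 : relMult N φ 1 = 0) (hcop : Nat.Coprime (deg φ) (relMult N φ φ)) :
    ∃ W ∈ M, restrict N W = restrict N φ := by
  obtain ⟨W, hW, hφW⟩ := hM.exists_relMult_ne_zero φ hφ h1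
  rw [relMult_comm] at hφW
  have hirr := hM.isIrr W hW
  have hdvd : deg φ ∣ deg W :=
    hcop.dvd_of_dvd_mul_right ⟨_, (hirr.deg_mul_relMult_comm hφ hφW φ).symm⟩
  refine ⟨W, hW, hirr.restrict_eq_of_deg_eq hφ hφW ?_⟩
  exact (hM.deg_le W hW φ (mem_cliffordClass.2 ⟨hφ, relMult_comm N W φ ▸ hφW⟩)).antisymm
    (Nat.le_of_dvd hirr.deg_pos hdvd)

theorem exists_restrict_eq_of_relMult_self (hM : IsMinimalTransversal N M)
    (h1 : relMult N φ 1 = 0) (h : relMult N φ φ = 1) : ∃ W ∈ M, restrict N W = restrict N φ :=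
  hM.exists_restrict_eq (isIrr_of_relMult_self h) h1 (h ▸ Nat.coprime_one_right _)

theorem relMult_self_le (hM : IsMinimalTransversal N M) (hW : W ∈ M) (h : relMult N φ W ≠ 0) :
    relMult N W W ≤ relMult N φ W := by
  have hirr := hM.isIrr W hW
  obtain ⟨χ, hχ, hφχ, hχW⟩ := exists_isIrr_relMult_ne_zero h
  refine le_trans (Nat.le_of_mul_le_mul_left ?_ hirr.deg_pos)
    (relMult_le_of_mult_ne_zero hχ hφχ W)
  rw [hχ.deg_mul_relMult_comm hirr hχW W]
  exact Nat.mul_le_mul_right _ (hM.deg_le W hW χ (mem_cliffordClass.2 ⟨hχ, hχW⟩))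

end IsMinimalTransversal

/-! ### Members of degree three and their partners -/

section Linked

open Character

variable {G : Type} [Group G] [Finite G]

/-- The characters `U ∈ M` of degree `3` for which `Y` occurs in `W * dual U` on `N`; the condition
is stated through `relMult N (W * dual Y) U = relMult N (W * dual U) Y`. -/
noncomputable def linked (N : Subgroup G) (M : Finset (Character G)) (W Y : Character G) :
    Finset (Character G) :=
  M.filter fun U => deg U = 3 ∧ relMult N (W * dual Y) U ≠ 0

variable {N : Subgroup G} {M : Finset (Character G)} {W Y U φ χ : Character G}

theorem mem_linked : U ∈ linked N M W Y ↔ U ∈ M ∧ deg U = 3 ∧ relMult N (W * dual Y) U ≠ 0 :=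
  Finset.mem_filter

theorem relMult_mul_dual_comm (N : Subgroup G) (W U Y : Character G) :
    relMult N (W * dual U) Y = relMult N (W * dual Y) U := by
  rw [relMult_mul_left, relMult_mul_left, dual_dual, dual_dual, mul_comm Y U]

theorem relMult_mul_dual_one (N : Subgroup G) (W U : Character G) :
    relMult N (W * dual U) 1 = relMult N W U := by
  rw [relMult_mul_left, one_mul, dual_dual]

variable [N.Normal]

theorem Character.IsIrr.three_mul_apply_add_deg (hN : IsNonabelianMinimalNormal N)
    (hχ : χ.IsIrr) {Y : Character G} (hY : Y.IsIrr) (hY1 : relMult N Y 1 = 0) (hY3 : deg Y = 3)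
    (hχY : relMult N χ Y ≠ 0) {z : N} (hz1 : z ≠ 1) (hz : z ^ 2 = 1) :
    3 * χ z + deg χ = 0 := by
  have h := congrArg (fun θ : Character N => θ z) (hχ.deg_nsmul_restrict_comm hY hχY)
  simp only [nsmul_apply, comap_apply, Subgroup.subtype_apply, hY3,
    hN.apply_eq_neg_one hY1 hY3 hz1 hz] at h
  push_cast at h
  linear_combination h

namespace IsMinimalTransversal

theorem three_mul_apply_add_deg (hM : IsMinimalTransversal N M)
    (hN : IsNonabelianMinimalNormal N) (h : ∀ Y ∈ M, relMult N φ Y ≠ 0 → deg Y = 3)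
    {z : N} (hz1 : z ≠ 1) (hz : z ^ 2 = 1) : (3 * φ z + deg φ : ℂ) = 4 * relMult N φ 1 := by
  have h_irr (χ) (hχ : χ ∈ irr G) :
      (mult φ χ * (3 * χ z + deg χ) : ℂ) = mult φ χ * (4 * relMult N χ 1) := by
    rw [mem_irr] at hχ
    by_cases hm : mult φ χ = 0
    · rw [hm, Nat.cast_zero, zero_mul, zero_mul]
    congr 1
    by_cases h1 : relMult N χ 1 = 0
    · obtain ⟨Y, hY, hχY⟩ := hM.exists_relMult_ne_zero χ hχ h1
      have hφY := (Nat.pos_of_ne_zero hχY).trans_le (relMult_le_of_mult_ne_zero hχ hm Y)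
      rw [hχ.three_mul_apply_add_deg hN (hM.isIrr Y hY) (hM.relMult_one Y hY)
        (h Y hY hφY.ne') hχY hz1 hz, h1, Nat.cast_zero, mul_zero]
    · have heq := congrArg (fun θ : Character N => θ z) (hχ.deg_nsmul_restrict_comm isIrr_one h1)
      simp only [map_one, one_nsmul, nsmul_apply, one_apply, mul_one, comap_apply,
        Subgroup.subtype_apply] at heq
      rw [hχ.relMult_eq_of_relMult_one_ne_zero h1, relMult_one_one, mul_one, heq]
      ring
  rw [relMult_eq_sum, deg_eq_sum]
  conv_lhs => enter [1]; rw [φ.eq_sum_mult]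
  simp only [Character.sum_apply, nsmul_apply]
  push_cast
  simp only [Finset.mul_sum, ← Finset.sum_add_distrib]
  refine Finset.sum_congr rfl fun χ hχ => ?_
  linear_combination h_irr χ hχ

/-- If all constituents of `W * dual U` on `N` were trivial or of degree `3`, its value `1` at an
involution would force the trivial character to occur three times. -/
theorem exists_mem_linked (hM : IsMinimalTransversal N M) (hN : IsNonabelianMinimalNormal N)
    (hW : W ∈ M) (hU : U ∈ M) (hW3 : deg W = 3) (hU3 : deg U = 3) :
    ∃ Y ∈ M, deg Y ≠ 3 ∧ U ∈ linked N M W Y := by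
  by_contra! hall
  have hWW := hM.relMult_self hN hW (by lia)
  obtain ⟨z, hz1, hz⟩ := hN.exists_involution_of_deg_eq_three (hM.relMult_one W hW) hW3
  have hsum := hM.three_mul_apply_add_deg (φ := W * dual U) hN (fun Y hY hne => by
    by_contra h3
    exact hall Y hY h3 (mem_linked.2 ⟨hU, hU3, relMult_mul_dual_comm N W U Y ▸ hne⟩)) hz1 hz
  have hz_inv : (z : G)⁻¹ = z := by
    rw [← Subgroup.coe_inv, inv_eq_of_mul_eq_one_right (pow_two z ▸ hz)]
  have hUW := relMult_le_one hWW (hM.relMult_self hN hU (by lia))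
  rw [mul_apply, Character.dual_apply, hz_inv, hN.apply_eq_neg_one (hM.relMult_one W hW) hW3 hz1 hz,
    hN.apply_eq_neg_one (hM.relMult_one U hU) hU3 hz1 hz, map_mul, deg_dual, hW3, hU3,
    relMult_mul_dual_one] at hsum
  have hfour : 4 * relMult N W U = 12 := by
    have : (4 * relMult N W U : ℂ) = 12 := by
      rw [← hsum]
      norm_num
    exact_mod_cast this
  lia

theorem card_linked_mul_relMult_self_le (hM : IsMinimalTransversal N M)
    (hN : IsNonabelianMinimalNormal N) (hW3 : deg W = 3) (hY : Y ∈ M) :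
    (linked N M W Y).card * relMult N Y Y ≤ deg Y := by
  have hsub {U} (hU : U ∈ linked N M W Y) := mem_linked.1 hU
  have hle : ∑ U ∈ linked N M W Y, relMult N (W * dual Y) U * deg U ≤ deg (W * dual Y) :=
    sum_relMult_mul_deg_le (fun U hU => hM.relMult_self hN (hsub hU).1 (by have := hsub hU; lia))
      (fun U hU U' hU' => hM.eq_of_relMult_ne_zero U (hsub hU).1 U' (hsub hU').1) _
  have hge : (linked N M W Y).card • (relMult N Y Y * 3) ≤
      ∑ U ∈ linked N M W Y, relMult N (W * dual Y) U * deg U := by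
    refine Finset.card_nsmul_le_sum _ _ _ fun U hU => ?_
    obtain ⟨-, hU3, hne⟩ := hsub hU
    rw [hU3, relMult_mul_dual_comm]
    rw [relMult_mul_dual_comm] at hne
    exact Nat.mul_le_mul_right 3 (hM.relMult_self_le hY hne)
  rw [map_mul deg, deg_dual, hW3] at hle
  rw [smul_eq_mul, ← mul_assoc] at hge
  lia

theorem card_linked_le_weight (hM : IsMinimalTransversal N M) (hN : IsNonabelianMinimalNormal N)
    (hW3 : deg W = 3) (hY : Y ∈ M) (hY3 : deg Y ≠ 3) :
    ((linked N M W Y).card : ℝ) ≤ weight N Y := by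
  have hpos : (0 : ℝ) < relMult N Y Y := by
    exact_mod_cast relMult_self_pos N (hM.isIrr Y hY).ne_zero
  have hle : ((linked N M W Y).card * relMult N Y Y : ℝ) ≤ deg Y := by
    exact_mod_cast hM.card_linked_mul_relMult_self_le hN hW3 hY
  have h4 : (4 : ℝ) ≤ deg Y := by
    exact_mod_cast (hM.three_le_deg hN hY).lt_of_ne hY3.symm
  rw [weight, le_div_iff₀ hpos]
  linarith

/-- Every member of degree `3` is linked to some `Y ∈ M` of larger degree, and outside `S` the
weight of `Y` pays for all members linked to it. -/
theorem le_sum_weight_of_linked_subset (hM : IsMinimalTransversal N M)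
    (hN : IsNonabelianMinimalNormal N) (hW : W ∈ M) (hW3 : deg W = 3)
    {S T : Finset (Character G)} (hS : ∀ Y ∈ S, Y ∈ M ∧ deg Y ≠ 3)
    (hT : ∀ Y ∈ S, linked N M W Y ⊆ T) {c : ℝ} (h : c + T.card ≤ ∑ Y ∈ S, weight N Y) :
    c ≤ ∑ Y ∈ M, weight N Y := by
  classical
  set D := M.filter fun Y => deg Y = 3
  set B := M.filter fun Y => ¬ deg Y = 3
  have hSB : S ⊆ B := fun Y hY => Finset.mem_filter.2 (hS Y hY)
  have hD : D ⊆ T ∪ (B \ S).biUnion (linked N M W) := fun U hU => by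
    obtain ⟨hU, hU3⟩ := Finset.mem_filter.1 hU
    obtain ⟨Y, hY, hY3, hUY⟩ := hM.exists_mem_linked hN hW hU hW3 hU3
    by_cases hYS : Y ∈ S
    · exact Finset.mem_union_left _ (hT Y hYS hUY)
    · exact Finset.mem_union_right _ (Finset.mem_biUnion.2
        ⟨Y, Finset.mem_sdiff.2 ⟨Finset.mem_filter.2 ⟨hY, hY3⟩, hYS⟩, hUY⟩)
  have card_D : (D.card : ℝ) ≤ T.card + ∑ Y ∈ B \ S, (linked N M W Y).card := by
    exact_mod_cast (Finset.card_le_card hD).trans ((Finset.card_union_le _ _).trans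
      (Nat.add_le_add_left Finset.card_biUnion_le _))
  have sum_linked : ∑ Y ∈ B \ S, ((linked N M W Y).card : ℝ) ≤ ∑ Y ∈ B \ S, weight N Y :=
    Finset.sum_le_sum fun Y hY => by
      obtain ⟨hY, hY3⟩ := Finset.mem_filter.1 (Finset.mem_sdiff.1 hY).1
      exact hM.card_linked_le_weight hN hW3 hY hY3
  have sum_D : ∑ Y ∈ D, weight N Y = -D.card := by
    rw [Finset.sum_congr rfl fun Y hY => hM.weight_eq_neg_one hN (Finset.mem_filter.1 hY).1
      (Finset.mem_filter.1 hY).2, Finset.sum_const, nsmul_eq_mul, mul_neg_one]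
  rw [← Finset.sum_filter_add_sum_filter_not M fun Y => deg Y = 3, sum_D,
    ← Finset.sum_sdiff hSB]
  push_cast at card_D
  linarith

end IsMinimalTransversal

end Linked

/-! ### A member of degree three that is not real on `N` -/

section Nonreal

open Character

variable {G : Type} [Group G] [Finite G] {N : Subgroup G} {φ : Character G}

namespace IsNonabelianMinimalNormal

theorem exists_involution_notMem_kernel (hN : IsNonabelianMinimalNormal N) {z : N} (hz1 : z ≠ 1)
    (hz : z ^ 2 = 1) {θ : Character N} (h1 : mult θ 1 = 0) (h0 : θ ≠ 0) :
    ∃ y : N, y ^ 2 = 1 ∧ y ∉ kernel θ := by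
  by_contra! hall
  refine h0 (deg_eq_zero.1 ?_)
  rw [← mult_one_of_kernel_eq_top (hN.eq_top_of_forall_involution_mem hz1 hz hall), h1]

/-- The values at involutions show that each involution of `N` lies in `kernel a` or `kernel b`.
Involutions outside `kernel b` and outside `kernel a` then commute, and their product is an
involution in neither kernel. -/
theorem restrict_symSq_ne_add (hN : IsNonabelianMinimalNormal N) (h1 : relMult N φ 1 = 0)
    (hd : deg φ = 3) {a b : Character N} (ha3 : deg a = 3) (hb3 : deg b = 3)
    (ha1 : mult a 1 = 0) (hb1 : mult b 1 = 0) : restrict N (symSq φ) ≠ a + b := by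
  intro hab
  have := hN.isPerfect
  have h_apply (z : N) : symSq φ z = a z + b z := congrArg (fun θ : Character N => θ z) hab
  have add_apply_eq_two {z : N} (hz : z ^ 2 = 1) (hz1 : z ≠ 1) : a z + b z = 2 := by
    rw [← h_apply, symSq_apply, hN.apply_eq_neg_one h1 hd hz1 hz, ← Subgroup.coe_pow, hz,
      Subgroup.coe_one, apply_one, hd]
    norm_num
  have mem_kernel_a {z : N} (h : a z = 3) : z ∈ kernel a :=
    mem_kernel_of_apply_eq_deg (by rw [h, ha3, Nat.cast_ofNat])
  have mem_kernel_b {z : N} (h : b z = 3) : z ∈ kernel b :=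
    mem_kernel_of_apply_eq_deg (by rw [h, hb3, Nat.cast_ofNat])
  have hdisj : Disjoint (kernel a) (kernel b) := by
    have hs1 : relMult N (symSq φ) 1 = 0 := by
      rw [relMult_apply, hab, map_one, map_add, AddMonoidHom.add_apply, ha1, hb1]
    have hs0 : deg (symSq φ) = 6 := by rw [deg_symSq, hd]; rfl
    refine Subgroup.disjoint_def.2 fun {x} hxa hxb => Subtype.ext (Subgroup.disjoint_def.1
      (hN.disjoint_kernel hs1 fun h => by simp [h] at hs0) (mem_kernel_of_apply_eq_deg ?_) x.2)
    rw [h_apply, apply_eq_deg_of_mem_kernel hxa, apply_eq_deg_of_mem_kernel hxb, ha3, hb3, hs0]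
    norm_num
  obtain ⟨z, hz1, hz⟩ := hN.exists_involution_of_deg_eq_three h1 hd
  obtain ⟨x, hx, hxa⟩ := hN.exists_involution_notMem_kernel hz1 hz ha1 fun h => by simp [h] at ha3
  obtain ⟨y, hy, hyb⟩ := hN.exists_involution_notMem_kernel hz1 hz hb1 fun h => by simp [h] at hb3
  have hx1 : x ≠ 1 := fun h => hxa (h ▸ one_mem _)
  have hy1 : y ≠ 1 := fun h => hyb (h ▸ one_mem _)
  have hax : a x = -1 := (apply_eq_three_or_eq_neg_one ha3 hx).resolve_left (mt mem_kernel_a hxa)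
  have hby : b y = -1 := (apply_eq_three_or_eq_neg_one hb3 hy).resolve_left (mt mem_kernel_b hyb)
  have hxb : x ∈ kernel b := mem_kernel_b (by linear_combination add_apply_eq_two hx hx1 - hax)
  have hya : y ∈ kernel a := mem_kernel_a (by linear_combination add_apply_eq_two hy hy1 - hby)
  have hcomm : Commute y x :=
    Subgroup.commute_of_normal_of_disjoint _ _ inferInstance inferInstance hdisj y x hya hxb
  have hxy1 : y * x ≠ 1 := fun h => hxa (inv_eq_of_mul_eq_one_right h ▸ inv_mem hya)
  have htwo := add_apply_eq_two (hcomm.mul_pow 2 ▸ by rw [hx, hy, mul_one]) hxy1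
  rw [mem_kernel.1 hya, hcomm.eq, mem_kernel.1 hxb, hax, hby] at htwo
  norm_num at htwo

theorem relMult_symSq_self (hN : IsNonabelianMinimalNormal N) (h1 : relMult N φ 1 = 0)
    (hd : deg φ = 3) (hs1 : relMult N (symSq φ) 1 = 0) :
    relMult N (symSq φ) (symSq φ) = 1 := by
  have hs : deg (restrict N (symSq φ)) = 6 := by
    rw [deg_comap, deg_symSq, hd]
    rfl
  obtain ⟨a, ha, hm⟩ := exists_isIrr_mult_ne_zero (φ := restrict N (symSq φ))
    fun h => by simp [h] at hs
  obtain ⟨b, hab⟩ := ha.exists_eq_add hm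
  by_cases hb : b = 0
  · rw [relMult_apply, hab, hb, add_zero, ha.mult_self]
  rw [relMult_apply, hab, map_one, map_add, AddMonoidHom.add_apply, Nat.add_eq_zero_iff] at hs1
  rw [hab, map_add] at hs
  have ha3 := hN.three_le_deg_of_mult_one_eq_zero hs1.1 ha.ne_zero
  have hb3 := hN.three_le_deg_of_mult_one_eq_zero hs1.2 hb
  exact absurd hab
    (hN.restrict_symSq_ne_add h1 hd (by lia) (by lia) hs1.1 hs1.2)

theorem relMult_mul_self_of_relMult_dual_eq_zero (hN : IsNonabelianMinimalNormal N)
    (h1 : relMult N φ 1 = 0) (hd : deg φ = 3) (h : relMult N φ (dual φ) = 0) :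
    relMult N (φ * φ) (φ * φ) = 2 := by
  have hsum : relMult N (symSq φ + altSq φ) 1 = 0 := by
    rw [symSq_add_altSq, relMult_mul_left, one_mul, h]
  rw [map_add, AddMonoidHom.add_apply, Nat.add_eq_zero_iff] at hsum
  have hs6 : deg (symSq φ) = 6 := by
    rw [deg_symSq, hd]
    rfl
  have ha3 : deg (altSq φ) = 3 := by
    rw [deg_altSq, hd]
    rfl
  have hs := hN.relMult_symSq_self h1 hd hsum.1
  have ha := hN.relMult_self_of_deg_le_five hsum.2 (fun h => by simp [h] at ha3) (by lia)
  have hsa := relMult_eq_zero_of_deg_ne hs ha (by lia)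
  rw [← symSq_add_altSq]
  simp only [map_add, AddMonoidHom.add_apply, hs, ha, hsa, relMult_comm N (altSq φ)]
  rfl

end IsNonabelianMinimalNormal

variable [N.Normal] {M : Finset (Character G)} {W : Character G}

theorem exists_restrict_eq_one_add (h : relMult N φ 1 = 1) :
    ∃ τ : Character G, restrict N φ = 1 + restrict N τ ∧ relMult N τ 1 = 0 := by
  obtain ⟨τ, hτ⟩ := exists_restrict_eq_add (relMult_one_one N) h
  rw [map_one] at hτ
  refine ⟨τ, hτ, ?_⟩
  rw [relMult_apply, hτ, map_one, map_add, AddMonoidHom.add_apply, isIrr_one.mult_self,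
    add_eq_left] at h
  rwa [relMult_apply, map_one]

/-- On `N`, `W * dual W` is the sum of `1` and an irreducible character of degree `8`. -/
theorem IsMinimalTransversal.eleven_le_sum_weight_of_relMult_dual_eq_zero
    (hM : IsMinimalTransversal N M) (hN : IsNonabelianMinimalNormal N) (hW : W ∈ M)
    (hW3 : deg W = 3) (h : relMult N W (dual W) = 0) : 11 ≤ ∑ Y ∈ M, weight N Y := by
  have hWW := hM.relMult_self hN hW (by lia)
  obtain ⟨τ, hτ, hτ1⟩ := exists_restrict_eq_one_add ((relMult_mul_dual_one N W W).trans hWW)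
  have hτd : deg τ = 8 := by
    have := congrArg deg hτ
    rw [deg_comap, map_mul, deg_dual, hW3, map_add, deg_comap, map_one] at this
    lia
  have hτ_self : relMult N τ τ = 1 := by
    have htwo : relMult N (W * dual W) (W * dual W) = 2 := by
      rw [← hN.relMult_mul_self_of_relMult_dual_eq_zero (hM.relMult_one W hW) hW3 h,
        relMult_mul_left, relMult_mul_left, dual_dual, mul_right_comm]
    rw [relMult_apply, map_one] at hτ1
    rw [relMult_apply, hτ] at htwo
    simp only [map_add, AddMonoidHom.add_apply, isIrr_one.mult_self, mult_comm 1, hτ1] at htwo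
    rw [relMult_apply]
    lia
  obtain ⟨Y, hY, hYτ⟩ := hM.exists_restrict_eq_of_relMult_self hτ1 hτ_self
  have hYd : deg Y = 8 := by rw [← deg_comap N.subtype Y, hYτ, deg_comap, hτd]
  have hYY : relMult N Y Y = 1 := by rw [relMult_apply, hYτ, ← relMult_apply, hτ_self]
  have hcard := hM.card_linked_mul_relMult_self_le hN hW3 hY
  rw [hYY, hYd, mul_one] at hcard
  refine hM.le_sum_weight_of_linked_subset hN hW hW3 (S := {Y}) (T := linked N M W Y)
    (by simp [hY, hYd]) (by simp) ?_
  rw [Finset.sum_singleton, weight, hYY, hYd]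
  have : ((linked N M W Y).card : ℝ) ≤ 8 := by exact_mod_cast hcard
  norm_num
  linarith

end Nonreal

/-! ### A member of degree three that is real on `N` -/

section Real

open Character

variable {G : Type} [Group G]

theorem mul_eq_altSq_add {φ ψ : Character G} (ha : altSq φ = φ) (h : φ * φ = 1 + ψ + φ) :
    φ * ψ = altSq ψ + ψ := by
  ext g
  have hψ (x : G) : ψ x = φ x ^ 2 - φ x - 1 := by
    have hx := congrArg (fun θ : Character G => θ x) h
    simp only [mul_apply, Character.add_apply, one_apply] at hx
    linear_combination -hx
  have hφ2 : φ (g ^ 2) = φ g ^ 2 - 2 * φ g := by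
    have hg := congrArg (fun θ : Character G => θ g) ha
    simp only [altSq_apply] at hg
    linear_combination -2 * hg
  simp only [mul_apply, Character.add_apply, altSq_apply, hψ, hφ2]
  ring

theorem dual_eq_of_mul_self_eq {φ ψ : Character G} (hd : dual φ = φ) (h : φ * φ = 1 + ψ + φ) :
    dual ψ = ψ := by
  ext g
  have hφ := congrArg (fun θ : Character G => θ g) hd
  have hg := congrArg (fun θ : Character G => θ g) h
  have hg' := congrArg (fun θ : Character G => θ g⁻¹) h
  simp only [mul_apply, Character.add_apply, one_apply, Character.dual_apply] at hφ hg hg' ⊢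
  rw [hφ] at hg'
  linear_combination hg - hg'

variable [Finite G]

theorem mult_altSq_of_mul_self_eq {φ ψ : Character G} (hφ : φ.IsIrr) (hψ : ψ.IsIrr) (hne : ψ ≠ φ)
    (hψ1 : mult ψ 1 = 0) (hd : dual φ = φ) (ha : altSq φ = φ) (h : φ * φ = 1 + ψ + φ) :
    mult (altSq ψ) φ = 1 ∧ mult (altSq ψ) 1 = 0 := by
  have hψφ := hψ.mult_eq_zero hφ hne
  have h1 : mult (φ * ψ) φ = 1 := by
    rw [mul_comm, mult_mul_left, hd, h, map_add, map_add, hψ1, hψ.mult_self, hψφ]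
  have h0 : mult (φ * ψ) 1 = 0 := by
    rw [mult_mul_left, one_mul, dual_eq_of_mul_self_eq hd h, mult_comm, hψφ]
  rw [mul_eq_altSq_add ha h, map_add, AddMonoidHom.add_apply] at h1 h0
  rw [hψφ, add_zero] at h1
  exact ⟨h1, Nat.eq_zero_of_add_eq_zero_right h0⟩

variable {N : Subgroup G} {φ : Character G}

theorem IsNonabelianMinimalNormal.sum_relMult_mul_deg_eq_or_add_three_le
    (hN : IsNonabelianMinimalNormal N) {s : Finset (Character G)}
    (hs : ∀ W ∈ s, relMult N W W = 1) (hdisj : ∀ W ∈ s, ∀ W' ∈ s, relMult N W W' ≠ 0 → W = W')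
    (h1 : relMult N φ 1 = 0) :
    ∑ W ∈ s, relMult N φ W * deg W = deg φ ∨ ∑ W ∈ s, relMult N φ W * deg W + 3 ≤ deg φ := by
  obtain ⟨τ, hτ⟩ := exists_restrict_eq_sum_add hs hdisj φ
  have hdeg := congrArg deg hτ
  simp only [map_add, map_sum, map_nsmul, deg_comap, smul_eq_mul] at hdeg
  rw [relMult_apply, hτ, map_add, AddMonoidHom.add_apply, Nat.add_eq_zero_iff, map_one] at h1
  by_cases h0 : τ = 0
  · left
    rw [hdeg, h0, map_zero, add_zero]
  · have := hN.three_le_deg_of_mult_one_eq_zero h1.2 h0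
    lia

variable {M : Finset (Character G)} {W V S K η : Character G}

namespace IsMinimalTransversal

theorem eq_or_relMult_ne_zero_of_mem_linked (hM : IsMinimalTransversal N M)
    (hN : IsNonabelianMinimalNormal N) (hW : W ∈ M) (hη : η ∈ M) (hη5 : deg η = 5)
    (h : restrict N (W * dual η) = restrict N W + restrict N V + restrict N η)
    {U : Character G} (hU : U ∈ linked N M W η) : U = W ∨ relMult N V U ≠ 0 := by
  obtain ⟨hUM, hU3, hne⟩ := mem_linked.1 hU
  by_contra! hcon
  refine hne ?_
  have hWU : relMult N W U = 0 := by
    by_contra hWU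
    exact hcon.1 (hM.eq_of_relMult_ne_zero W hW U hUM hWU).symm
  have hηU : relMult N η U = 0 := relMult_eq_zero_of_deg_ne (hM.relMult_self hN hη hη5.le)
    (hM.relMult_self hN hUM (by lia)) (by lia)
  rw [relMult_apply] at hWU hηU ⊢
  rw [h, map_add, map_add, AddMonoidHom.add_apply, AddMonoidHom.add_apply, hWU, hηU,
    ← relMult_apply, hcon.2]

/-- `W * dual K` has degree `12`, and beside `η` and two characters of degree `3` only a linear
character would remain. -/
theorem card_linked_le_one (hM : IsMinimalTransversal N M) (hN : IsNonabelianMinimalNormal N)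
    (hW : W ∈ M) (hW3 : deg W = 3) (hη : η ∈ M) (hη5 : deg η = 5) (hK : K ∈ M) (hK4 : deg K = 4)
    (h : relMult N (W * dual η) K ≠ 0) : (linked N M W K).card ≤ 1 := by
  classical
  refine Finset.card_le_one.2 fun U hU U' hU' => ?_
  by_contra hne
  obtain ⟨hUM, hU3, hWU⟩ := mem_linked.1 hU
  obtain ⟨hUM', hU3', hWU'⟩ := mem_linked.1 hU'
  rw [relMult_mul_dual_comm] at h
  have h1 : relMult N (W * dual K) 1 = 0 := by
    rw [relMult_mul_dual_one]
    exact relMult_eq_zero_of_deg_ne (hM.relMult_self hN hW (by lia))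
      (hM.relMult_self hN hK (by lia)) (by lia)
  have hmem (Y) (hY : Y ∈ ({η, U, U'} : Finset (Character G))) : Y ∈ M ∧ deg Y ≤ 5 := by
    simp only [Finset.mem_insert, Finset.mem_singleton] at hY
    rcases hY with rfl | rfl | rfl
    exacts [⟨hη, hη5.le⟩, ⟨hUM, by lia⟩, ⟨hUM', by lia⟩]
  have hsum := hN.sum_relMult_mul_deg_eq_or_add_three_le
    (fun Y hY => hM.relMult_self hN (hmem Y hY).1 (hmem Y hY).2)
    (fun Y hY Y' hY' => hM.eq_of_relMult_ne_zero Y (hmem Y hY).1 Y' (hmem Y' hY').1) h1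
  have hη_notMem : η ∉ ({U, U'} : Finset (Character G)) := by
    rw [Finset.mem_insert, Finset.mem_singleton]
    rintro (rfl | rfl) <;> lia
  rw [Finset.sum_insert hη_notMem, Finset.sum_pair hne, map_mul deg, deg_dual, hη5, hU3, hU3',
    hW3, hK4] at hsum
  lia

variable [N.Normal]

theorem exists_restrict_mul_self_eq (hM : IsMinimalTransversal N M)
    (hN : IsNonabelianMinimalNormal N) (hW : W ∈ M) (hW3 : deg W = 3)
    (hdual : restrict N (dual W) = restrict N W) :
    altSq (restrict N W) = restrict N W ∧ ∃ η ∈ M, deg η = 5 ∧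
      restrict N W * restrict N W = 1 + restrict N η + restrict N W := by
  have := hN.isPerfect
  have halt : altSq (restrict N W) = restrict N W := by
    rw [altSq_eq_dual (by rw [deg_comap, hW3]), dual_comap, hdual]
  refine ⟨halt, ?_⟩
  have hsym : relMult N (symSq W) 1 = 1 := by
    have h : relMult N (symSq W + altSq W) 1 = 1 := by
      rw [symSq_add_altSq, relMult_mul_left, one_mul, relMult_apply, hdual, ← relMult_apply,
        hM.relMult_self hN hW (by lia)]
    rwa [map_add, AddMonoidHom.add_apply, relMult_apply N (altSq W), comap_altSq, halt,
      ← relMult_apply, hM.relMult_one W hW, add_zero] at h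
  obtain ⟨τ, hτ, hτ1⟩ := exists_restrict_eq_one_add hsym
  have hτ5 : deg τ = 5 := by
    have hd := congrArg deg hτ
    rw [deg_comap, deg_symSq, hW3, map_add, map_one, deg_comap] at hd
    exact Nat.add_left_cancel hd.symm
  obtain ⟨η, hη, hητ⟩ := hM.exists_restrict_eq_of_relMult_self hτ1
    (hN.relMult_self_of_deg_le_five hτ1 (fun h => by simp [h] at hτ5) hτ5.le)
  refine ⟨η, hη, by rw [← deg_comap N.subtype η, hητ, deg_comap, hτ5], ?_⟩
  rw [← symSq_add_altSq, halt, ← comap_symSq, hτ, hητ]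

/-- On `N`, the product of `W` and the character of degree `5` in `W * W` is `altSq η + η`. -/
theorem exists_restrict_mul_dual_eq (hM : IsMinimalTransversal N M)
    (hN : IsNonabelianMinimalNormal N) (hW : W ∈ M) (hW3 : deg W = 3)
    (hdual : restrict N (dual W) = restrict N W) :
    ∃ η ∈ M, ∃ V : Character G, deg η = 5 ∧ relMult N V 1 = 0 ∧ relMult N V W = 0 ∧
      restrict N (W * dual η) = restrict N W + restrict N V + restrict N η := by
  obtain ⟨halt, η, hη, hη5, hmul⟩ := hM.exists_restrict_mul_self_eq hN hW hW3 hdual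
  rw [← dual_comap] at hdual
  have hWW := hM.relMult_self hN hW (by lia)
  have hη1 : mult (restrict N η) 1 = 0 := by
    rw [← map_one (restrict N), ← relMult_apply, hM.relMult_one η hη]
  have hne : restrict N η ≠ restrict N W := fun h => by
    have hd := congrArg deg h
    rw [deg_comap, deg_comap] at hd
    lia
  obtain ⟨haltW, halt1⟩ := mult_altSq_of_mul_self_eq (isIrr_restrict hWW)
    (isIrr_restrict (hM.relMult_self hN hη hη5.le)) hne hη1 hdual halt hmul
  rw [← comap_altSq, ← relMult_apply] at haltW
  rw [← comap_altSq, ← map_one (restrict N), ← relMult_apply] at halt1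
  obtain ⟨V, hV⟩ := exists_restrict_eq_add hWW haltW
  rw [relMult_apply, hV, map_add, AddMonoidHom.add_apply, Nat.add_eq_zero_iff] at halt1
  rw [relMult_apply, hV, map_add, AddMonoidHom.add_apply, ← relMult_apply, hWW,
    add_eq_left] at haltW
  refine ⟨η, hη, V, hη5, halt1.2, haltW, ?_⟩
  rw [map_mul (restrict N), ← dual_comap, dual_eq_of_mul_self_eq hdual hmul,
    mul_eq_altSq_add halt hmul, ← comap_altSq, hV]

theorem eleven_le_sum_weight_of_isIrr (hM : IsMinimalTransversal N M)
    (hN : IsNonabelianMinimalNormal N) (hW : W ∈ M) (hW3 : deg W = 3) (hη : η ∈ M)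
    (hη5 : deg η = 5) (h : restrict N (W * dual η) = restrict N W + restrict N V + restrict N η)
    (hV7 : deg V = 7) (hV1 : relMult N V 1 = 0) (hV : V.IsIrr) :
    11 ≤ ∑ Y ∈ M, weight N Y := by
  classical
  have hpos := relMult_self_pos N hV.ne_zero
  have hle : relMult N V V ≤ 4 := by
    have := hN.relMult_self_le hV1
    rwa [hV7] at this
  obtain ⟨Z, hZ, hZV⟩ := hM.exists_restrict_eq hV hV1 (by
    rw [hV7]
    interval_cases relMult N V V <;> rfl)
  have hZ7 : deg Z = 7 := by rw [← deg_comap N.subtype Z, hZV, deg_comap, hV7]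
  have hZZ : relMult N Z Z = relMult N V V := by simp only [relMult_apply, hZV]
  have hηW : linked N M W η ⊆ {W} := fun U hU => by
    refine Finset.mem_singleton.2 ((hM.eq_or_relMult_ne_zero_of_mem_linked hN hW hη hη5 h
      hU).resolve_right fun hVU => ?_)
    obtain ⟨hUM, hU3, -⟩ := mem_linked.1 hU
    rw [relMult_apply, ← hZV] at hVU
    have := hM.eq_of_relMult_ne_zero Z hZ U hUM hVU
    lia
  have hη_ne : η ≠ Z := fun h => by lia
  refine hM.le_sum_weight_of_linked_subset hN hW hW3 (S := {η, Z}) (T := insert W (linked N M W Z))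
    (by simp [hη, hη5, hZ, hZ7]) (fun Y hY U hU => ?_) ?_
  · simp only [Finset.mem_insert, Finset.mem_singleton] at hY ⊢
    rcases hY with rfl | rfl
    exacts [Or.inl (Finset.mem_singleton.1 (hηW hU)), Or.inr hU]
  have hcard : ((linked N M W Z).card * relMult N V V : ℝ) ≤ 7 := by
    exact_mod_cast hZ7 ▸ hZZ ▸ hM.card_linked_mul_relMult_self_le hN hW3 hZ
  have hinsert : ((insert W (linked N M W Z)).card : ℝ) ≤ (linked N M W Z).card + 1 := by
    exact_mod_cast Finset.card_insert_le W (linked N M W Z)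
  have hpos' : (0 : ℝ) < relMult N V V := by exact_mod_cast hpos
  have hle' : (relMult N V V : ℝ) ≤ 4 := by exact_mod_cast hle
  have hZ_weight : 3 + (linked N M W Z).card ≤ weight N Z := by
    rw [weight, hZZ, hZ7, le_div_iff₀ hpos']
    push_cast
    linarith
  rw [Finset.sum_pair hη_ne, hM.weight_eq_nine hN hη hη5]
  linarith

theorem exists_restrict_eq_add_of_not_isIrr (hM : IsMinimalTransversal N M)
    (hN : IsNonabelianMinimalNormal N) (hV7 : deg V = 7) (hV1 : relMult N V 1 = 0)
    (hV : ¬ V.IsIrr) :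
    ∃ S ∈ M, ∃ K ∈ M, deg S = 3 ∧ deg K = 4 ∧ restrict N V = restrict N S + restrict N K := by
  obtain ⟨χ, hχ, hm⟩ := exists_isIrr_mult_ne_zero (φ := V) fun h => by simp [h] at hV7
  obtain ⟨τ, rfl⟩ := hχ.exists_eq_add hm
  have hτ0 : τ ≠ 0 := fun h => hV (by rwa [h, add_zero])
  rw [map_add, AddMonoidHom.add_apply, Nat.add_eq_zero_iff] at hV1
  rw [map_add] at hV7
  have hχ3 := hN.three_le_deg_of_relMult_one_eq_zero hV1.1 hχ.ne_zero
  have hτ3 := hN.three_le_deg_of_relMult_one_eq_zero hV1.2 hτ0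
  obtain ⟨A, hA, hAχ⟩ := hM.exists_restrict_eq_of_relMult_self hV1.1
    (hN.relMult_self_of_deg_le_five hV1.1 hχ.ne_zero (by lia))
  obtain ⟨B, hB, hBτ⟩ := hM.exists_restrict_eq_of_relMult_self hV1.2
    (hN.relMult_self_of_deg_le_five hV1.2 hτ0 (by lia))
  have hAd : deg A = deg χ := by rw [← deg_comap N.subtype A, hAχ, deg_comap]
  have hBd : deg B = deg τ := by rw [← deg_comap N.subtype B, hBτ, deg_comap]
  rw [map_add, ← hAχ, ← hBτ]
  obtain h3 | h4 : deg χ = 3 ∨ deg χ = 4 := by lia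
  · exact ⟨A, hA, B, hB, by lia, by lia, rfl⟩
  · exact ⟨B, hB, A, hA, by lia, by lia, add_comm _ _⟩

theorem exists_mem_linked_of_relMult_mul_dual (hM : IsMinimalTransversal N M)
    (hN : IsNonabelianMinimalNormal N) (hW3 : deg W = 3) (hη : η ∈ M) (hη5 : deg η = 5)
    (hS : S ∈ M) (hS3 : deg S = 3) (hWS : relMult N W S = 0)
    (h : relMult N (W * dual η) S = 1) : ∃ K ∈ M, deg K = 4 ∧ S ∈ linked N M W K := by
  rw [relMult_mul_dual_comm] at h
  rw [← relMult_mul_dual_one] at hWS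
  obtain ⟨τ, hτ⟩ := exists_restrict_eq_add (hM.relMult_self hN hη hη5.le) h
  have hτ4 : deg τ = 4 := by
    have hd := congrArg deg hτ
    rw [deg_comap, map_mul, deg_dual, hW3, hS3, map_add, deg_comap, deg_comap, hη5] at hd
    lia
  rw [relMult_apply, hτ, map_add, AddMonoidHom.add_apply, Nat.add_eq_zero_iff] at hWS
  have hττ := hN.relMult_self_of_deg_le_five hWS.2 (fun h => by simp [h] at hτ4) (by lia)
  obtain ⟨K, hK, hKτ⟩ := hM.exists_restrict_eq_of_relMult_self hWS.2 hττ
  have hK4 : deg K = 4 := by rw [← deg_comap N.subtype K, hKτ, deg_comap, hτ4]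
  refine ⟨K, hK, hK4, mem_linked.2 ⟨hS, hS3, ?_⟩⟩
  rw [relMult_mul_dual_comm, relMult_apply, hτ, hKτ, map_add, AddMonoidHom.add_apply,
    ← relMult_apply N τ, hττ]
  exact Nat.succ_ne_zero _

theorem eleven_le_sum_weight_of_linked_subset_pair (hM : IsMinimalTransversal N M)
    (hN : IsNonabelianMinimalNormal N) (hW : W ∈ M) (hW3 : deg W = 3) (hη : η ∈ M)
    (hη5 : deg η = 5) (hηWS : ∀ U ∈ linked N M W η, U = W ∨ U = S) (hK : K ∈ M) (hK4 : deg K = 4)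
    (hKWS : ∀ U ∈ linked N M W K, U = W ∨ U = S) : 11 ≤ ∑ Y ∈ M, weight N Y := by
  classical
  have hηK : η ≠ K := fun h => by lia
  refine hM.le_sum_weight_of_linked_subset hN hW hW3 (S := {η, K}) (T := {W, S})
    (by simp [hη, hη5, hK, hK4]) (fun Y hY U hU => ?_) ?_
  · simp only [Finset.mem_insert, Finset.mem_singleton] at hY ⊢
    rcases hY with rfl | rfl
    exacts [hηWS U hU, hKWS U hU]
  · rw [Finset.sum_pair hηK, hM.weight_eq_nine hN hη hη5, hM.weight_eq_four hN hK hK4]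
    have : (({W, S} : Finset (Character G)).card : ℝ) ≤ 2 := by exact_mod_cast Finset.card_le_two
    linarith

theorem eleven_le_sum_weight_of_ne (hM : IsMinimalTransversal N M)
    (hN : IsNonabelianMinimalNormal N) (hW : W ∈ M) (hW3 : deg W = 3) (hη : η ∈ M)
    (hη5 : deg η = 5) (hηWS : ∀ U ∈ linked N M W η, U = W ∨ U = S) (hK : K ∈ M) (hK4 : deg K = 4)
    (hcard : (linked N M W K).card ≤ 1) {K' : Character G} (hK' : K' ∈ M) (hK4' : deg K' = 4)
    (hSK' : S ∈ linked N M W K') (hKK' : K ≠ K') : 11 ≤ ∑ Y ∈ M, weight N Y := by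
  classical
  have hηK : η ≠ K := fun h => by lia
  have hηK' : η ≠ K' := fun h => by lia
  refine hM.le_sum_weight_of_linked_subset hN hW hW3 (S := {η, K, K'})
    (T := insert W (linked N M W K ∪ linked N M W K'))
    (by simp [hη, hη5, hK, hK4, hK', hK4']) (fun Y hY U hU => ?_) ?_
  · simp only [Finset.mem_insert, Finset.mem_singleton, Finset.mem_union] at hY ⊢
    rcases hY with rfl | rfl | rfl
    · exact (hηWS U hU).imp_right fun h : U = S => Or.inr (h.symm ▸ hSK')
    · exact Or.inr (Or.inl hU)
    · exact Or.inr (Or.inr hU)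
  · have hcard' := hM.card_linked_mul_relMult_self_le hN hW3 hK'
    rw [hM.relMult_self hN hK' (by lia), hK4'] at hcard'
    have h6 : ((insert W (linked N M W K ∪ linked N M W K')).card : ℝ) ≤ 6 := by
      have h1 := Finset.card_insert_le W (linked N M W K ∪ linked N M W K')
      have h2 := Finset.card_union_le (linked N M W K) (linked N M W K')
      exact_mod_cast (by lia : (insert W (linked N M W K ∪ linked N M W K')).card ≤ 6)
    rw [Finset.sum_insert (by simp [hηK, hηK']), Finset.sum_pair hKK',
      hM.weight_eq_nine hN hη hη5, hM.weight_eq_four hN hK hK4, hM.weight_eq_four hN hK' hK4']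
    linarith

theorem eleven_le_sum_weight_of_restrict_eq_add (hM : IsMinimalTransversal N M)
    (hN : IsNonabelianMinimalNormal N) (hW : W ∈ M) (hW3 : deg W = 3) (hη : η ∈ M)
    (hη5 : deg η = 5) (h : restrict N (W * dual η) = restrict N W + restrict N V + restrict N η)
    (hVW : relMult N V W = 0) (hS : S ∈ M) (hS3 : deg S = 3) (hK : K ∈ M) (hK4 : deg K = 4)
    (hV : restrict N V = restrict N S + restrict N K) : 11 ≤ ∑ Y ∈ M, weight N Y := by
  classical
  have hSS := hM.relMult_self hN hS (by lia)
  have hKK := hM.relMult_self hN hK (by lia)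
  have relMult_V (φ) : relMult N V φ = relMult N S φ + relMult N K φ := by
    simp only [relMult_apply, hV, map_add, AddMonoidHom.add_apply]
  have relMult_mul (φ) : relMult N (W * dual η) φ =
      relMult N W φ + (relMult N S φ + relMult N K φ) + relMult N η φ := by
    rw [← relMult_V]
    simp only [relMult_apply, h, map_add, AddMonoidHom.add_apply]
  have hWS : relMult N W S = 0 := by
    rw [relMult_V, relMult_comm] at hVW
    exact Nat.eq_zero_of_add_eq_zero_right hVW
  have hηWS : ∀ U ∈ linked N M W η, U = W ∨ U = S := fun U hU => by
    refine (hM.eq_or_relMult_ne_zero_of_mem_linked hN hW hη hη5 h hU).imp_right fun hVU => ?_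
    obtain ⟨hUM, hU3, -⟩ := mem_linked.1 hU
    rw [relMult_V, relMult_eq_zero_of_deg_ne hKK (hM.relMult_self hN hUM (by lia)) (by lia),
      add_zero] at hVU
    exact (hM.eq_of_relMult_ne_zero S hS U hUM hVU).symm
  obtain ⟨K', hK', hK4', hSK'⟩ := hM.exists_mem_linked_of_relMult_mul_dual hN hW3 hη hη5 hS hS3 hWS
    (by rw [relMult_mul, hWS, hSS, relMult_eq_zero_of_deg_ne hKK hSS (by lia),
      relMult_eq_zero_of_deg_ne (hM.relMult_self hN hη hη5.le) hSS (by lia)])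
  have hcard := hM.card_linked_le_one hN hW hW3 hη hη5 hK hK4 (by
    rw [relMult_mul, hKK]
    lia)
  rcases eq_or_ne K K' with rfl | hKK'
  · exact hM.eleven_le_sum_weight_of_linked_subset_pair hN hW hW3 hη hη5 hηWS hK hK4
      fun U hU => Or.inr (Finset.card_le_one.1 hcard U hU S hSK')
  · exact hM.eleven_le_sum_weight_of_ne hN hW hW3 hη hη5 hηWS hK hK4 hcard hK' hK4' hSK' hKK'

theorem eleven_le_sum_weight_of_restrict_dual_eq (hM : IsMinimalTransversal N M)
    (hN : IsNonabelianMinimalNormal N) (hW : W ∈ M) (hW3 : deg W = 3)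
    (hdual : restrict N (dual W) = restrict N W) : 11 ≤ ∑ Y ∈ M, weight N Y := by
  obtain ⟨η, hη, V, hη5, hV1, hVW, h⟩ := hM.exists_restrict_mul_dual_eq hN hW hW3 hdual
  have hV7 : deg V = 7 := by
    have hd := congrArg deg h
    rw [deg_comap, map_mul, deg_dual, hW3, hη5, map_add, map_add, deg_comap, deg_comap, deg_comap,
      hW3, hη5] at hd
    lia
  by_cases hV : V.IsIrr
  · exact hM.eleven_le_sum_weight_of_isIrr hN hW hW3 hη hη5 h hV7 hV1 hV
  · obtain ⟨S, hS, K, hK, hS3, hK4, hV⟩ := hM.exists_restrict_eq_add_of_not_isIrr hN hV7 hV1 hV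
    exact hM.eleven_le_sum_weight_of_restrict_eq_add hN hW hW3 hη hη5 h hVW hS hS3 hK hK4 hV

theorem eleven_le_sum_weight_of_deg_eq_three (hM : IsMinimalTransversal N M)
    (hN : IsNonabelianMinimalNormal N) (hW : W ∈ M) (hW3 : deg W = 3) :
    11 ≤ ∑ Y ∈ M, weight N Y := by
  by_cases h : relMult N W (dual W) = 0
  · exact hM.eleven_le_sum_weight_of_relMult_dual_eq_zero hN hW hW3 h
  · have hWW := hM.relMult_self hN hW (by lia)
    exact hM.eleven_le_sum_weight_of_restrict_dual_eq hN hW hW3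
      (restrict_eq_of_relMult_ne_zero hWW (by rw [relMult_dual, hWW]) h).symm

end IsMinimalTransversal

end Real

/-! ### The action on the Sylow subgroups of `N` -/

section Sylow

open MulAction

theorem mul_pred_card_orbits_lt_card {K X : Type*} [Group K] [MulAction K X] [Finite X] {p : ℕ}
    (x : X) (h : ∀ y ≠ x, p ≤ Nat.card (orbit K y)) :
    p * (Nat.card (orbitRel.Quotient K X) - 1) < Nat.card X := by
  classical
  have := Fintype.ofFinite (orbitRel.Quotient K X)
  have orbit_mk (y : X) : orbitRel.Quotient.orbit (Quotient.mk'' y : orbitRel.Quotient K X) =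
      orbit K y := orbitRel.Quotient.orbit_mk y
  rw [Nat.card_congr (selfEquivSigmaOrbits' K X), Nat.card_sigma,
    ← Finset.add_sum_erase _ _ (Finset.mem_univ (Quotient.mk'' x)), Nat.card_eq_fintype_card,
    ← Finset.card_univ, ← Finset.card_erase_of_mem (Finset.mem_univ (Quotient.mk'' x)), mul_comm,
    ← smul_eq_mul, add_comm]
  nth_rewrite 1 [← add_zero (_ • p)]
  refine add_lt_add_of_le_of_lt (Finset.card_nsmul_le_sum _ _ _ fun q hq => ?_) ?_
  · induction q using Quotient.inductionOn' with
    | h y =>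
      rw [orbit_mk]
      exact h y fun hyx => Finset.ne_of_mem_erase hq (by rw [hyx])
  · rw [orbit_mk]
    exact Nat.card_pos_iff.2 ⟨⟨x, mem_orbit_self x⟩, inferInstance⟩

theorem le_card_orbit_sylow {p : ℕ} [Fact p.Prime] {H : Type*} [Group H] [Finite H]
    {P Q : Sylow p H} (hQP : Q ≠ P) :
    p ≤ Nat.card (orbit P Q) := by
  obtain ⟨n, hn⟩ := P.isPGroup'.card_orbit Q
  have hn0 : n ≠ 0 := by
    rintro rfl
    have := (Nat.card_eq_one_iff_unique.1 hn).1
    have hQ : Q ∈ fixedPoints P (Sylow p H) := mem_fixedPoints'.2 fun y hy =>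
      congrArg Subtype.val (Subsingleton.elim (⟨y, hy⟩ : orbit P Q) ⟨Q, mem_orbit_self Q⟩)
    exact hQP (Sylow.ext (P.3 Q.2 (P.2.sylow_mem_fixedPoints_iff.1 hQ)))
  rw [hn]
  exact Nat.le_self_pow hn0 p

variable {p : ℕ} {G : Type} [Group G] {N : Subgroup G}

variable (p N) in
/-- The set of Sylow `p`-subgroups of a normal subgroup `N` of `G`. It is a type of its own so that
`N` acts on it through the conjugation action of `G`, not through the one of `N`. -/
def SylowSet : Type := Sylow p N

namespace SylowSet

instance [Finite G] : Finite (SylowSet p N) := inferInstanceAs (Finite (Sylow p N))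

variable [N.Normal]

noncomputable instance : MulAction G (SylowSet p N) :=
  compHom (Sylow p N) (MulAut.conjNormal : G →* MulAut N)

theorem smul_eq (n : N) (P : Sylow p N) : (n • (P : SylowSet p N) : SylowSet p N) = n • P := by
  change (MulAut.conjNormal (n : G) : MulAut N) • P = MulAut.conj n • P
  rw [MulAut.conjNormal_val]

variable [Fact p.Prime] [Finite G]

instance : IsPretransitive N (SylowSet p N) where
  exists_smul_eq P Q := by
    obtain ⟨n, hn⟩ := exists_smul_eq N (α := Sylow p N) P Q
    exact ⟨n, (smul_eq n P).trans hn⟩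

theorem le_card_orbit_stabilizer {P Q : SylowSet p N} (hQP : Q ≠ P) :
    p ≤ Nat.card (orbit (stabilizer N P) Q) := by
  let P' : Sylow p N := P
  refine (le_card_orbit_sylow (P := P') hQP).trans (Nat.card_mono (Set.toFinite _) ?_)
  rintro _ ⟨n, rfl⟩
  have hn : (n : N) ∈ stabilizer N P := mem_stabilizer_iff.2 <| (smul_eq (n : N) P').trans
    (Sylow.smul_eq_iff_mem_normalizer.2 (Subgroup.le_normalizer n.2))
  exact ⟨⟨n, hn⟩, smul_eq (n : N) Q⟩

end SylowSet

section

open Character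

variable {G X : Type} [Group G] [Finite G] [MulAction G X] [Finite X]

theorem relMult_permChar_one (N : Subgroup G) [Nonempty X] [IsPretransitive N X] :
    relMult N (permChar G X) 1 = 1 := by
  rw [relMult_apply, restrict_permChar, map_one, mult_permChar_one, Nat.card_eq_one_iff_unique]
  exact ⟨(pretransitive_iff_subsingleton_quotient N X).1 inferInstance,
    Nonempty.map Quotient.mk'' inferInstance⟩

theorem relMult_permChar_self (N : Subgroup G) [IsPretransitive N X] (x : X) :
    relMult N (permChar G X) (permChar G X) =
      Nat.card (orbitRel.Quotient (stabilizer N x) X) := by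
  rw [relMult_apply, restrict_permChar]
  conv_lhs => rw [← mul_one (permChar N X), mult_permChar_mul x, mul_one]
  rw [relMult_comm, relMult_apply, restrict_permChar, map_one, mult_permChar_one]

theorem exists_isIrr_mul_relMult_self_le_deg {N : Subgroup G} {τ : Character G} {p : ℕ}
    (hτ : τ ≠ 0) (h1 : relMult N τ 1 = 0) (h : p * relMult N τ τ ≤ deg τ) :
    ∃ χ : Character G, χ.IsIrr ∧ relMult N χ 1 = 0 ∧ p * relMult N χ χ ≤ deg χ := by
  by_contra! hlt
  have lt_of_mult {χ : Character G} (hχ : χ.IsIrr) (hm : mult τ χ ≠ 0) :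
      deg χ < p * relMult N χ τ := by
    have hχ1 : relMult N χ 1 ≤ relMult N τ 1 := relMult_le_of_mult_ne_zero hχ hm 1
    have hχτ : relMult N χ χ ≤ relMult N χ τ := by
      rw [relMult_comm N χ τ]
      exact relMult_le_of_mult_ne_zero hχ hm χ
    exact (hlt χ hχ (by lia)).trans_le (Nat.mul_le_mul_left p hχτ)
  obtain ⟨ψ, hψ, hmψ⟩ := exists_isIrr_mult_ne_zero hτ
  refine h.not_gt ?_
  rw [τ.deg_eq_sum, relMult_eq_sum, Finset.mul_sum]
  simp only [mul_left_comm p]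
  refine Finset.sum_lt_sum (fun χ hχ => ?_) ⟨ψ, mem_irr.2 hψ,
    Nat.mul_lt_mul_of_pos_left (lt_of_mult hψ hmψ) (Nat.pos_of_ne_zero hmψ)⟩
  by_cases hm : mult τ χ = 0
  · rw [hm, zero_mul, zero_mul]
  · exact Nat.mul_le_mul_left _ (lt_of_mult (mem_irr.1 hχ) hm).le

theorem exists_isIrr_mul_relMult_self_le_deg_of_isPretransitive {N : Subgroup G}
    [N.Normal] [IsPretransitive N X] [Nontrivial X] {p : ℕ} (x : X)
    (h : ∀ y ≠ x, p ≤ Nat.card (orbit (stabilizer N x) y)) :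
    ∃ χ : Character G, χ.IsIrr ∧ relMult N χ 1 = 0 ∧ p * relMult N χ χ ≤ deg χ := by
  have hπ1 := relMult_permChar_one (X := X) N
  obtain ⟨τ, hτ, hτ1⟩ := exists_restrict_eq_one_add hπ1
  have hdeg : Nat.card X = 1 + deg τ := by
    rw [← deg_permChar (G := G), ← deg_comap N.subtype, hτ, map_add, map_one, deg_comap]
  have hself : Nat.card (orbitRel.Quotient (stabilizer N x) X) = 1 + relMult N τ τ := by
    rw [relMult_apply, map_one] at hτ1
    rw [← relMult_permChar_self, relMult_apply, hτ]
    simp only [map_add, AddMonoidHom.add_apply, isIrr_one.mult_self, hτ1, mult_comm 1, add_zero,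
      zero_add, relMult_apply]
  refine exists_isIrr_mul_relMult_self_le_deg (τ := τ) (fun h0 => ?_) hτ1 ?_
  · have := Finite.one_lt_card (α := X)
    rw [hdeg, h0, map_zero] at this
    exact this.false
  · have := mul_pred_card_orbits_lt_card x h
    rw [hself, hdeg, Nat.add_sub_cancel_left] at this
    lia

end

namespace IsNonabelianMinimalNormal

variable {G : Type} [Group G] {N : Subgroup G}

theorem not_isSolvable (hN : IsNonabelianMinimalNormal N) : ¬ Group.IsSolvable N := by
  have := hN.isPerfect
  obtain ⟨x, y, hxy⟩ := hN.nonabelian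
  have : Nontrivial N := ⟨_, _, hxy⟩
  exact Group.IsPerfect.not_isSolvable N

variable [Finite G]

theorem nontrivial_sylow (hN : IsNonabelianMinimalNormal N) {p : ℕ} [Fact p.Prime]
    (hp : p ∣ Nat.card N) : Nontrivial (Sylow p N) := by
  have := hN.normal
  by_contra hsub
  rw [not_nontrivial_iff_subsingleton] at hsub
  let P : Sylow p N := default
  rcases hN.eq_bot_or_eq (P.map N.subtype) inferInstance (Subgroup.map_subtype_le _) with h | h
  · exact P.ne_bot_of_dvd_card hp ((Subgroup.map_eq_bot_iff_of_injective _
      N.subtype_injective).1 h)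
  · have hP : (P : Subgroup N) = ⊤ := Subgroup.map_injective N.subtype_injective (by
      rw [h, ← MonoidHom.range_eq_map, N.range_subtype])
    have hPN : IsPGroup p N := (hP ▸ P.isPGroup').of_equiv Subgroup.topEquiv
    have := hPN.isNilpotent
    exact hN.not_isSolvable inferInstance

/-- The character comes from the action of `G` on the Sylow `p`-subgroups of `N`. -/
theorem exists_isIrr_mul_relMult_self_le_deg (hN : IsNonabelianMinimalNormal N) {p : ℕ}
    [Fact p.Prime] (hp : p ∣ Nat.card N) :
    ∃ χ : Character G, χ.IsIrr ∧ relMult N χ 1 = 0 ∧ p * relMult N χ χ ≤ χ.deg := by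
  have := hN.normal
  have : Nontrivial (SylowSet p N) := hN.nontrivial_sylow hp
  exact exists_isIrr_mul_relMult_self_le_deg_of_isPretransitive (X := SylowSet p N)
    (default : Sylow p N) fun _ => SylowSet.le_card_orbit_stabilizer

end IsNonabelianMinimalNormal

end Sylow

/-! ### The lower bound -/

section LowerBound

open Character

variable {G : Type} [Group G] [Finite G] {N : Subgroup G} {M : Finset (Character G)}
  {Y : Character G}

namespace IsMinimalTransversal

theorem two_le_weight (hM : IsMinimalTransversal N M) (hN : IsNonabelianMinimalNormal N)
    (hY : Y ∈ M) (h4 : 4 ≤ deg Y) (h15 : deg Y ≤ 15) : 2 ≤ weight N Y := by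
  have hpos := relMult_self_pos N (hM.isIrr Y hY).ne_zero
  have hle := hN.relMult_self_le (hM.relMult_one Y hY)
  have h : 2 * relMult N Y Y + 16 ≤ 5 * deg Y := by
    generalize deg Y = d at *
    interval_cases d <;> lia
  have h' : (2 * relMult N Y Y + 16 : ℝ) ≤ 5 * deg Y := by exact_mod_cast h
  rw [weight, le_div_iff₀ (by exact_mod_cast hpos)]
  linarith

variable [N.Normal]

theorem exists_mem_mul_relMult_self_le_deg (hM : IsMinimalTransversal N M) {χ : Character G}
    (hχ : χ.IsIrr) (h1 : relMult N χ 1 = 0) {p : ℕ} (hp : p * relMult N χ χ ≤ deg χ) :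
    ∃ Y ∈ M, p * relMult N Y Y ≤ deg Y := by
  obtain ⟨Y, hY, hYχ⟩ := hM.exists_relMult_ne_zero χ hχ h1
  refine ⟨Y, hY, ?_⟩
  have h_left : deg Y * relMult N χ χ = deg χ * relMult N Y χ :=
    hχ.deg_mul_relMult_comm (hM.isIrr Y hY) hYχ χ
  have h_right : deg Y * relMult N Y χ = deg χ * relMult N Y Y := by
    rw [relMult_comm N Y χ]
    exact hχ.deg_mul_relMult_comm (hM.isIrr Y hY) hYχ Y
  have hdeg : 0 < deg χ * deg χ := Nat.mul_pos hχ.deg_pos hχ.deg_pos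
  refine Nat.le_of_mul_le_mul_left ?_ hdeg
  calc deg χ * deg χ * (p * relMult N Y Y)
      = p * (deg χ * (deg χ * relMult N Y Y)) := by ring
    _ = p * (deg Y * (deg Y * relMult N χ χ)) := by
      rw [← h_right, mul_left_comm (deg χ), ← h_left]
    _ = deg Y * deg Y * (p * relMult N χ χ) := by ring
    _ ≤ deg Y * deg χ * deg χ :=
      Nat.mul_le_mul (Nat.mul_le_mul_left _ (hM.deg_le Y hY χ (mem_cliffordClass.2 ⟨hχ, hYχ⟩))) hp
    _ = deg χ * deg χ * deg Y := by ring

theorem exists_mem_ne_of_not_dvd_deg (hM : IsMinimalTransversal N M) (hY : Y ∈ M)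
    (hYY : relMult N Y Y = 1) {τ : Character G} (h1 : relMult N τ 1 = 0) (h : ¬ deg Y ∣ deg τ) :
    ∃ W ∈ M, W ≠ Y ∧ deg W ≤ deg τ := by
  obtain ⟨χ, hχ, hm, hχY⟩ : ∃ χ ∈ irr G, mult τ χ ≠ 0 ∧ relMult N χ Y = 0 := by
    by_contra! hχY
    refine h ?_
    rw [τ.deg_eq_sum]
    refine Finset.dvd_sum fun χ hχ => ?_
    rcases eq_or_ne (mult τ χ) 0 with hm | hm
    · exact ⟨0, by rw [hm, zero_mul, mul_zero]⟩
    · have hYχ : deg Y * relMult N χ Y = deg χ := by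
        rw [(mem_irr.1 hχ).deg_mul_relMult_comm (hM.isIrr Y hY) (hχY χ hχ hm) Y, hYY, mul_one]
      exact Dvd.dvd.mul_left ⟨_, hYχ.symm⟩ _
  rw [mem_irr] at hχ
  have hχ1 : relMult N χ 1 = 0 :=
    Nat.eq_zero_of_le_zero ((relMult_le_of_mult_ne_zero hχ hm 1).trans_eq h1)
  obtain ⟨W, hW, hWχ⟩ := hM.exists_relMult_ne_zero χ hχ hχ1
  refine ⟨W, hW, ?_, ?_⟩
  · rintro rfl
    exact hWχ hχY
  · exact (hM.deg_le W hW χ (mem_cliffordClass.2 ⟨hχ, hWχ⟩)).trans (deg_le_of_mult_ne_zero hχ hm)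

theorem exists_mem_ne_of_deg_eq_five (hM : IsMinimalTransversal N M)
    (hN : IsNonabelianMinimalNormal N) (hY : Y ∈ M) (hY5 : deg Y = 5) :
    ∃ W ∈ M, W ≠ Y ∧ deg W ≤ 15 := by
  have hYY := hM.relMult_self hN hY hY5.le
  have hYY' : relMult N (dual Y) (dual Y) = 1 := by rw [relMult_dual, hYY]
  have of_relMult_one {φ : Character G} (h1 : relMult N φ 1 = 1) (h5 : ¬ 5 ∣ deg φ - 1)
      (h15 : deg φ ≤ 16) : ∃ W ∈ M, W ≠ Y ∧ deg W ≤ 15 := by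
    obtain ⟨τ, hτ, hτ1⟩ := exists_restrict_eq_one_add h1
    have hd : deg φ = 1 + deg τ := by
      rw [← deg_comap N.subtype φ, hτ, map_add, map_one, deg_comap]
    obtain ⟨W, hW, hne, hle⟩ := hM.exists_mem_ne_of_not_dvd_deg hY hYY hτ1 (by
      rwa [hd, Nat.add_sub_cancel_left, ← hY5] at h5)
    exact ⟨W, hW, hne, by lia⟩
  by_cases hreal : relMult N Y (dual Y) = 0
  · obtain ⟨W, hW, hWY⟩ := hM.exists_restrict_eq_of_relMult_self
      (by rw [← map_one Character.dual, relMult_dual, hM.relMult_one Y hY]) hYY'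
    refine ⟨W, hW, ?_, ?_⟩
    · rintro rfl
      rw [relMult_apply, ← hWY, ← relMult_apply, hYY] at hreal
      exact one_ne_zero hreal
    · rw [← deg_comap N.subtype W, hWY, deg_comap, deg_dual, hY5]
      norm_num
  · have hsum : relMult N (symSq Y) 1 + relMult N (altSq Y) 1 = 1 := by
      rw [← AddMonoidHom.add_apply, ← map_add, symSq_add_altSq, relMult_mul_left, one_mul,
        relMult_apply, ← restrict_eq_of_relMult_ne_zero hYY hYY' hreal, ← relMult_apply, hYY]
    rcases Nat.eq_zero_or_pos (relMult N (symSq Y) 1) with h0 | hpos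
    · exact of_relMult_one (φ := altSq Y) (by lia) (by rw [deg_altSq, hY5]; decide)
        (by rw [deg_altSq, hY5]; decide)
    · exact of_relMult_one (φ := symSq Y) (by lia) (by rw [deg_symSq, hY5]; decide)
        (by rw [deg_symSq, hY5]; decide)

theorem eleven_le_sum_weight_of_forall_deg_ne_three (hM : IsMinimalTransversal N M)
    (hN : IsNonabelianMinimalNormal N) (h3 : ∀ W ∈ M, deg W ≠ 3) (hY : Y ∈ M)
    (hY5 : 5 * relMult N Y Y ≤ deg Y) : 11 ≤ ∑ W ∈ M, weight N W := by
  classical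
  have four_le {W} (hW : W ∈ M) : 4 ≤ deg W :=
    (hM.three_le_deg hN hW).lt_of_ne' (h3 W hW)
  have sum_le {S : Finset (Character G)} (hS : S ⊆ M) :
      ∑ W ∈ S, weight N W ≤ ∑ W ∈ M, weight N W :=
    Finset.sum_le_sum_of_subset_of_nonneg hS fun W hW _ => weight_nonneg (four_le hW)
  have hpos := relMult_self_pos N (hM.isIrr Y hY).ne_zero
  obtain h5 | h6 : deg Y = 5 ∨ 6 ≤ deg Y := by lia
  · obtain ⟨W, hW, hne, hW15⟩ := hM.exists_mem_ne_of_deg_eq_five hN hY h5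
    refine le_trans ?_ (sum_le (S := {Y, W}) (Finset.insert_subset hY
      (Finset.singleton_subset_iff.2 hW)))
    rw [Finset.sum_pair hne.symm, hM.weight_eq_nine hN hY h5]
    have := hM.two_le_weight hN hW (four_le hW) hW15
    linarith
  · refine le_trans ?_ (sum_le (Finset.singleton_subset_iff.2 hY))
    have hY5' : (5 * relMult N Y Y : ℝ) ≤ deg Y := by exact_mod_cast hY5
    have h6' : (6 : ℝ) ≤ deg Y := by exact_mod_cast h6
    rw [Finset.sum_singleton, weight, le_div_iff₀ (by exact_mod_cast hpos)]
    linarith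

end IsMinimalTransversal

namespace IsNonabelianMinimalNormal

theorem exists_prime_five_le_dvd_card (hN : IsNonabelianMinimalNormal N) :
    ∃ p, p.Prime ∧ 5 ≤ p ∧ p ∣ Nat.card N := by
  by_contra! h
  have primeFactors_subset : (Nat.card N).primeFactors ⊆ {2, 3} := by
    intro p hp
    have hp' := Nat.prime_of_mem_primeFactors hp
    have hlt : p < 5 := by
      by_contra! h5
      exact h p hp' h5 (Nat.dvd_of_mem_primeFactors hp)
    interval_cases p <;> first | decide | norm_num at hp'
  exact hN.not_isSolvable (isSolvable_of_card_primeFactors_le_two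
    (Finset.card_le_card primeFactors_subset))

theorem exists_isMinimalTransversal_eleven_le (hN : IsNonabelianMinimalNormal N) :
    ∃ M, IsMinimalTransversal N M ∧ 11 ≤ ∑ W ∈ M, weight N W := by
  have := hN.normal
  obtain ⟨M, hM⟩ := exists_isMinimalTransversal N
  refine ⟨M, hM, ?_⟩
  by_cases! h3 : ∃ W ∈ M, deg W = 3
  · obtain ⟨W, hW, hW3⟩ := h3
    exact hM.eleven_le_sum_weight_of_deg_eq_three hN hW hW3
  · obtain ⟨p, hp, hp5, hpN⟩ := hN.exists_prime_five_le_dvd_card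
    have : Fact p.Prime := ⟨hp⟩
    obtain ⟨χ, hχ, h1, hle⟩ := hN.exists_isIrr_mul_relMult_self_le_deg hpN
    obtain ⟨Y, hY, hY5⟩ :=
      hM.exists_mem_mul_relMult_self_le_deg hχ h1 ((Nat.mul_le_mul_right _ hp5).trans hle)
    exact hM.eleven_le_sum_weight_of_forall_deg_ne_three hN h3 hY hY5

end IsNonabelianMinimalNormal

theorem acd_eq_sum_irr_div_card (G : Type) [Group G] [Finite G] :
    acd G = (∑ χ ∈ irr G, (deg χ : ℝ)) / (irr G).card := by
  have coe_injective : Function.Injective fun χ : Character G => (χ : G → ℂ) :=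
    fun _ _ h => Character.ext (congrFun h)
  have irrChar_eq : {χ ∈ IrrChar G | True} = (fun χ : Character G => (χ : G → ℂ)) '' irr G := by
    ext f
    simp only [and_true, Set.ofPred_mem_eq, Set.mem_image, Finset.mem_coe, mem_irr]
    exact ⟨exists_of_mem_irrChar, fun ⟨_, hχ, h⟩ => h ▸ hχ⟩
  rw [acd, acdRel, irrChar_eq, finsum_mem_image coe_injective.injOn, finsum_mem_coe_finset,
    Set.ncard_image_of_injective _ coe_injective, Set.ncard_coe_finset]
  rfl

end LowerBound

end AverageCharacterDegree

/-- If a finite group `G` has a non-abelian minimal normal subgroup contained in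
the commutator subgroup `G'`, then `acd(G) ≥ 16/5`. -/
theorem acd_ge_sixteen_fifths_of_nonabelian_minimal_normal (G : Type) [Group G] [Finite G]
    (N : Subgroup G) [N.Normal] (hnt : N ≠ ⊥)
    (hmin : ∀ K : Subgroup G, K.Normal → K ≤ N → K = ⊥ ∨ K = N)
    (hna : ∃ x y : N, x * y ≠ y * x)
    (hle : N ≤ commutator G) :
    16 / 5 ≤ acd G := by
  open AverageCharacterDegree in
  have hN : IsNonabelianMinimalNormal N := ⟨inferInstance, hmin, hna⟩
  obtain ⟨M, hM, h11⟩ := hN.exists_isMinimalTransversal_eleven_le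
  have hsum : 0 ≤ ∑ χ ∈ irr G, (5 * Character.deg χ - 16 : ℝ) := hM.sum_irr_nonneg hN h11
  have hcard : (0 : ℝ) < (irr G).card :=
    Nat.cast_pos.2 (Finset.card_pos.2 ⟨1, mem_irr.2 Character.isIrr_one⟩)
  rw [Finset.sum_sub_distrib, ← Finset.mul_sum, Finset.sum_const, nsmul_eq_mul] at hsum
  rw [acd_eq_sum_irr_div_card, le_div_iff₀ hcard]
  linarith
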